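/- arXiv:2603.05203 — 12 statements merged into one kernel-verified Lean document; each statement's English description precedes it below -/
import Mathlib

section
/- Let G be a finite connected simple graph with vertex set V, and let S, T ⊆ V be subsets with |S| = |T| = n. Then there exist bijective enumerations s₁, …, sₙ of S and t₁, …, tₙ of T, and for each i ∈ {1, …, n} a walk Wᵢ in G from sᵢ to tᵢ, such that for every i: (a) no vertex of Wᵢ other than its first vertex sᵢ belongs to {s_{i+1}, …, sₙ}, and (b) no vertex of Wᵢ belongs to {t₁, …, t_{i−1}}. (Hence sliding unlabeled tokens one at a time, in the order i = 1, …, n, along the walks Wᵢ is collision-free — at step i the occupied vertices are exactly {s_{i+1}, …, sₙ} ∪ {t₁, …, t_{i−1}} — and each token moves exactly once.) -/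
/-- Existential form of the reconfiguration claim, with all walks staying in `B`. -/
def TokenPlan {V : Type*} (G : SimpleGraph V) (B : V → Prop) (S T : Finset V) (n : ℕ) : Prop :=
  ∃ (s t : Fin n → V),
    Function.Injective s ∧ Function.Injective t ∧
    (∀ v : V, v ∈ S ↔ ∃ i : Fin n, s i = v) ∧
    (∀ v : V, v ∈ T ↔ ∃ i : Fin n, t i = v) ∧
    ∀ i : Fin n, ∃ W : G.Walk (s i) (t i),
      (∀ v ∈ W.support, B v) ∧
      (∀ v ∈ W.support, ∀ j : Fin n, i < j → v ≠ s j) ∧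
      (∀ v ∈ W.support, ∀ j : Fin n, j < i → v ≠ t j)

/-- Time reversal. -/
theorem TokenPlan.symm {V : Type*} {G : SimpleGraph V} {B : V → Prop} {S T : Finset V} {n : ℕ}
    (h : TokenPlan G B S T n) : TokenPlan G B T S n := by
  obtain ⟨s, t, hs, ht, hS, hT, hW⟩ := h
  refine ⟨fun i => t i.rev, fun i => s i.rev, ht.comp Fin.rev_injective,
    hs.comp Fin.rev_injective, ?_, ?_, ?_⟩
  · intro v
    rw [hT]
    exact ⟨fun ⟨i, hi⟩ => ⟨i.rev, by simpa using hi⟩, fun ⟨i, hi⟩ => ⟨i.rev, hi⟩⟩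
  · intro v
    rw [hS]
    exact ⟨fun ⟨i, hi⟩ => ⟨i.rev, by simpa using hi⟩, fun ⟨i, hi⟩ => ⟨i.rev, hi⟩⟩
  · intro i
    obtain ⟨W, h1, h2, h3⟩ := hW i.rev
    refine ⟨W.reverse, ?_, ?_, ?_⟩
    · intro v hv
      exact h1 v (by simpa using hv)
    · intro v hv j hj
      exact h3 v (by simpa using hv) j.rev (Fin.rev_lt_rev.2 hj)
    · intro v hv j hj
      exact h2 v (by simpa using hv) j.rev (Fin.rev_lt_rev.2 hj)

/-- From a walk meeting `S` one extracts a final part meeting `S` only at its start. -/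
theorem exists_last_token {V : Type*} {G : SimpleGraph V} (S : Finset V) {u v : V}
    (p : G.Walk u v) (h : ∃ x ∈ p.support, x ∈ S) :
    ∃ a ∈ S, ∃ W : G.Walk a v, ∀ x ∈ W.support, x ∈ S → x = a := by
  induction p with
  | nil =>
    obtain ⟨x, hx, hxS⟩ := h
    simp only [SimpleGraph.Walk.support_nil, List.mem_singleton] at hx
    subst hx
    exact ⟨x, hxS, SimpleGraph.Walk.nil, by simp⟩
  | @cons a b c hab q ih =>
    by_cases hq : ∃ x ∈ q.support, x ∈ S
    · exact ih hq
    · obtain ⟨x, hx, hxS⟩ := h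
      simp only [SimpleGraph.Walk.support_cons, List.mem_cons] at hx
      rcases hx with rfl | hx
      · refine ⟨x, hxS, SimpleGraph.Walk.cons hab q, ?_⟩
        intro y hy hyS
        simp only [SimpleGraph.Walk.support_cons, List.mem_cons] at hy
        rcases hy with rfl | hy
        · rfl
        · exact absurd ⟨y, hy, hyS⟩ hq
      · exact absurd ⟨x, hx, hxS⟩ hq

/-- Transfer of a plan from the graph with `v` deleted. -/
theorem TokenPlan.lift {V : Type*} {G : SimpleGraph V} {v : V} {S T : Finset V} {n : ℕ}
    (hvS : v ∉ S) (hvT : v ∉ T) {S' T' : Finset ({v}ᶜ : Set V)}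
    (hS' : ∀ x, x ∈ S' ↔ (x : V) ∈ S) (hT' : ∀ x, x ∈ T' ↔ (x : V) ∈ T)
    (h : TokenPlan (G.induce ({v}ᶜ : Set V)) (fun _ => True) S' T' n) :
    TokenPlan G (fun x => x ≠ v) S T n := by
  obtain ⟨s, t, hs, ht, hS, hT, hW⟩ := h
  refine ⟨fun i => (s i : V), fun i => (t i : V), Subtype.val_injective.comp hs,
    Subtype.val_injective.comp ht, ?_, ?_, ?_⟩
  · intro x
    constructor
    · intro hx
      have hxv : x ≠ v := fun e => hvS (e ▸ hx)
      obtain ⟨i, hi⟩ := (hS ⟨x, hxv⟩).1 ((hS' _).2 hx)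
      exact ⟨i, by simp [hi]⟩
    · rintro ⟨i, rfl⟩
      exact (hS' _).1 ((hS _).2 ⟨i, rfl⟩)
  · intro x
    constructor
    · intro hx
      have hxv : x ≠ v := fun e => hvT (e ▸ hx)
      obtain ⟨i, hi⟩ := (hT ⟨x, hxv⟩).1 ((hT' _).2 hx)
      exact ⟨i, by simp [hi]⟩
    · rintro ⟨i, rfl⟩
      exact (hT' _).1 ((hT _).2 ⟨i, rfl⟩)
  · intro i
    obtain ⟨W, -, h2, h3⟩ := hW i
    have key : ∀ x ∈ (W.map (SimpleGraph.Embedding.induce ({v}ᶜ : Set V)).toHom).support,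
        ∃ y ∈ W.support, (y : V) = x := by
      intro x hx
      rw [SimpleGraph.Walk.support_map, List.mem_map] at hx
      exact hx
    refine ⟨W.map (SimpleGraph.Embedding.induce ({v}ᶜ : Set V)).toHom, ?_, ?_, ?_⟩
    · intro x hx
      obtain ⟨y, -, rfl⟩ := key x hx
      exact y.2
    · intro x hx j hj
      obtain ⟨y, hy, rfl⟩ := key x hx
      exact fun e => h2 y hy j hj (Subtype.ext e)
    · intro x hx j hj
      obtain ⟨y, hy, rfl⟩ := key x hx
      exact fun e => h3 y hy j hj (Subtype.ext e)

/-- First move: bring the nearest token `a` to `v`. -/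
theorem TokenPlan.first {V : Type*} [DecidableEq V] {G : SimpleGraph V} {v a : V}
    {S T : Finset V} {n : ℕ}
    (ha : a ∈ S) (hv : v ∈ T) (W : G.Walk a v) (hW : ∀ x ∈ W.support, x ∈ S → x = a)
    (h : TokenPlan G (fun x => x ≠ v) (S.erase a) (T.erase v) n) :
    TokenPlan G (fun _ => True) S T (n + 1) := by
  obtain ⟨s, t, hs, ht, hS, hT, hP⟩ := h
  have hsS : ∀ i, s i ≠ a ∧ s i ∈ S := fun i => by simpa using (hS (s i)).2 ⟨i, rfl⟩
  have htT : ∀ i, t i ≠ v ∧ t i ∈ T := fun i => by simpa using (hT (t i)).2 ⟨i, rfl⟩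
  refine ⟨Fin.cons a s, Fin.cons v t, ?_, ?_, ?_, ?_, ?_⟩
  · rw [Fin.cons_injective_iff]
    exact ⟨fun ⟨i, hi⟩ => (hsS i).1 hi, hs⟩
  · rw [Fin.cons_injective_iff]
    exact ⟨fun ⟨i, hi⟩ => (htT i).1 hi, ht⟩
  · intro x
    rw [Fin.exists_fin_succ]
    simp only [Fin.cons_zero, Fin.cons_succ]
    rw [← hS x, Finset.mem_erase]
    by_cases hx : a = x
    · subst hx; simp [ha]
    · simp [hx, Ne.symm hx]
  · intro x
    rw [Fin.exists_fin_succ]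
    simp only [Fin.cons_zero, Fin.cons_succ]
    rw [← hT x, Finset.mem_erase]
    by_cases hx : v = x
    · subst hx; simp [hv]
    · simp [hx, Ne.symm hx]
  · intro i
    refine Fin.cases ?_ (fun i => ?_) i
    · refine ⟨W, fun _ _ => trivial, ?_, ?_⟩
      · intro x hx j hj
        induction j using Fin.cases with
        | zero => exact absurd hj (lt_irrefl _)
        | succ j =>
          intro e
          rw [Fin.cons_succ] at e
          have := hW x hx (e ▸ (hsS j).2)
          exact (hsS j).1 (e.symm.trans this)
      · intro x hx j hj
        exact absurd hj (Fin.not_lt_zero j)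
    · obtain ⟨U, h1, h2, h3⟩ := hP i
      refine ⟨U, fun _ _ => trivial, ?_, ?_⟩
      · intro x hx j hj
        induction j using Fin.cases with
        | zero => exact absurd hj (Fin.not_lt_zero _)
        | succ j => exact h2 x hx j (Fin.succ_lt_succ_iff.1 hj)
      · intro x hx j hj
        induction j using Fin.cases with
        | zero => exact h1 x hx
        | succ j => exact h3 x hx j (Fin.succ_lt_succ_iff.1 hj)

theorem TokenPlan.weaken {V : Type*} {G : SimpleGraph V} {B : V → Prop} {S T : Finset V} {n : ℕ}
    (h : TokenPlan G B S T n) : TokenPlan G (fun _ => True) S T n := by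
  obtain ⟨s, t, hs, ht, hS, hT, hP⟩ := h
  refine ⟨s, t, hs, ht, hS, hT, fun i => ?_⟩
  obtain ⟨U, -, h2, h3⟩ := hP i
  exact ⟨U, fun _ _ => trivial, h2, h3⟩

/-- A vertex whose deletion leaves a preconnected graph. -/
theorem exists_noncut {V : Type*} [Finite V] [Nonempty V] {G : SimpleGraph V}
    (hG : G.Preconnected) : ∃ v : V, (G.induce ({v}ᶜ : Set V)).Preconnected := by
  rcases subsingleton_or_nontrivial V with h | h
  · obtain ⟨v⟩ := ‹Nonempty V›
    refine ⟨v, fun a b => ?_⟩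
    rw [Subsingleton.elim a b]
  · have hc : G.Connected := ⟨hG⟩
    obtain ⟨v, hv⟩ := hc.exists_connected_induce_compl_singleton_of_finite_nontrivial
    exact ⟨v, hv.preconnected⟩

theorem tokenPlan_step {V : Type*} [DecidableEq V] {G : SimpleGraph V} (hG : G.Preconnected)
    {v : V} {S T : Finset V} {n : ℕ} (hS : S.card = n) (hT : T.card = n) (hv : v ∈ T)
    (IH : ∀ (S T : Finset V) (n : ℕ), v ∉ S → v ∉ T → S.card = n → T.card = n →
      TokenPlan G (fun x => x ≠ v) S T n) :
    TokenPlan G (fun _ => True) S T n := by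
  have hpos : 0 < S.card := by
    rw [hS, ← hT]; exact Finset.card_pos.2 ⟨v, hv⟩
  obtain ⟨u, hu⟩ := Finset.card_pos.1 hpos
  obtain ⟨p⟩ := hG u v
  obtain ⟨a, ha, W, hW⟩ := exists_last_token S p ⟨u, p.start_mem_support, hu⟩
  obtain ⟨m, rfl⟩ : ∃ m, n = m + 1 := ⟨n - 1, by omega⟩
  refine TokenPlan.first ha hv W hW (IH _ _ _ ?_ ?_ ?_ ?_)
  · intro hvS
    rw [Finset.mem_erase] at hvS
    exact hvS.1 (hW v W.end_mem_support hvS.2)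
  · simp
  · rw [Finset.card_erase_of_mem ha, hS]; rfl
  · rw [Finset.card_erase_of_mem hv, hT]; rfl

universe u in
theorem tokenPlan_exists (m : ℕ) : ∀ (V : Type u) [Fintype V], Fintype.card V = m →
    ∀ (G : SimpleGraph V), G.Preconnected → ∀ (S T : Finset V) (n : ℕ),
    S.card = n → T.card = n → TokenPlan G (fun _ => True) S T n := by
  classical
  induction m with
  | zero =>
    intro V _ hV G hG S T n hS hT
    have hE : IsEmpty V := Fintype.card_eq_zero_iff.1 hV
    have : n = 0 := by rw [← hS, Finset.eq_empty_of_isEmpty S]; rfl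
    subst this
    exact ⟨fun i => i.elim0, fun i => i.elim0, fun i => i.elim0, fun i => i.elim0,
      fun v => hE.elim v, fun v => hE.elim v, fun i => i.elim0⟩
  | succ m ih =>
    intro V _ hV G hG S T n hS hT
    have hne : Nonempty V := Fintype.card_pos_iff.1 (by omega)
    obtain ⟨v, hv⟩ := exists_noncut hG
    have IH : ∀ (S T : Finset V) (n : ℕ), v ∉ S → v ∉ T → S.card = n → T.card = n →
        TokenPlan G (fun x => x ≠ v) S T n := by
      intro S T n hvS hvT hS hT
      have hc : ∀ A : Finset V, v ∉ A →
          (A.subtype (fun x => x ∈ ({v}ᶜ : Set V))).card = A.card := by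
        intro A hA
        rw [Finset.card_subtype, Finset.filter_true_of_mem]
        intro x hx e
        exact hA (e ▸ hx)
      refine TokenPlan.lift hvS hvT (S' := S.subtype _) (T' := T.subtype _)
        (fun x => Finset.mem_subtype) (fun x => Finset.mem_subtype)
        (ih _ ?_ _ hv _ _ n ?_ ?_)
      · rw [Fintype.card_compl_set, hV]
        simp
      · rw [hc S hvS, hS]
      · rw [hc T hvT, hT]
    by_cases h1 : v ∈ T
    · exact tokenPlan_step hG hS hT h1 IH
    · by_cases h2 : v ∈ S
      · exact (tokenPlan_step hG hT hS h2 IH).symm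
      · exact (IH S T n h2 h1 hS hT).weaken

/-- Unlabeled token reconfiguration on a finite connected graph: there are
enumerations `s` of `S` and `t` of `T` and walks `W i : s i → t i` such that
walk `i` avoids all still-occupied start vertices `s j` (`j > i`), except at its
first vertex, and avoids all already-filled target vertices `t j` (`j < i`). -/
theorem unlabeled_token_reconfiguration
    {V : Type*} [Fintype V] (G : SimpleGraph V) (hG : G.Connected)
    (S T : Finset V) (n : ℕ) (hS : S.card = n) (hT : T.card = n) :
    ∃ (s t : Fin n → V),
      Function.Injective s ∧ Function.Injective t ∧
      (∀ v : V, v ∈ S ↔ ∃ i : Fin n, s i = v) ∧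
      (∀ v : V, v ∈ T ↔ ∃ i : Fin n, t i = v) ∧
      ∃ W : (i : Fin n) → G.Walk (s i) (t i),
        ∀ i : Fin n,
          (∀ v ∈ (W i).support, v ≠ s i → ∀ j : Fin n, i < j → v ≠ s j) ∧
          (∀ v ∈ (W i).support, ∀ j : Fin n, j < i → v ≠ t j) := by

  obtain ⟨s, t, hs, ht, hS', hT', hP⟩ :=
    tokenPlan_exists _ V rfl G hG.preconnected S T n hS hT
  choose W h1 h2 h3 using hP
  exact ⟨s, t, hs, ht, hS', hT', W, fun i => ⟨fun v hv _ => h2 i v hv, h3 i⟩⟩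
end

section
/- Let p, q ∈ ℤ² with |p₁ − q₁| + |p₂ − q₂| = 1, and let t ∈ [0, 1]. Set x = p + t·(q − p) ∈ ℝ². Then cell(x) ⊆ cell(p) ∪ cell(q), and moreover the interior of cell(x) is disjoint from cell(r) for every r ∈ ℤ² with r ∉ {p, q}. -/
/-- The closed axis-aligned unit square with bottom-left corner `x`. -/
def cell (x : ℝ × ℝ) : Set (ℝ × ℝ) := Set.Icc x.1 (x.1 + 1) ×ˢ Set.Icc x.2 (x.2 + 1)

/-- The canonical embedding of an integer grid point into the plane. -/
def toR2 (p : ℤ × ℤ) : ℝ × ℝ := ((p.1 : ℝ), (p.2 : ℝ))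

/-- Sliding a unit square linearly between two grid-adjacent integer positions `p` and `q`
stays inside `cell p ∪ cell q`, and its interior never meets any other grid cell. -/
theorem slide_between_adjacent_cells
    (p q : ℤ × ℤ) (hadj : |p.1 - q.1| + |p.2 - q.2| = 1)
    (t : ℝ) (ht : t ∈ Set.Icc (0 : ℝ) 1)
    (x : ℝ × ℝ) (hx : x = toR2 p + t • (toR2 q - toR2 p)) :
    cell x ⊆ cell (toR2 p) ∪ cell (toR2 q) ∧
      ∀ r : ℤ × ℤ, r ≠ p → r ≠ q → interior (cell x) ∩ cell (toR2 r) = ∅ := by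
  obtain ⟨a, b⟩ := p
  obtain ⟨c, d⟩ := q
  obtain ⟨ht0, ht1⟩ := ht
  subst hx
  have hc : (c = a + 1 ∧ d = b) ∨ (c = a - 1 ∧ d = b) ∨ (c = a ∧ d = b + 1) ∨
      (c = a ∧ d = b - 1) := by
    simp only at hadj
    rcases abs_cases (a - c) with h1 | h1 <;> rcases abs_cases (b - d) with h2 | h2 <;> omega
  constructor
  · rintro ⟨u, v⟩ h
    simp only [cell, toR2, Set.mem_union, Set.mem_prod, Set.mem_Icc, Prod.fst_add, Prod.snd_add,
      Prod.smul_fst, Prod.smul_snd, Prod.fst_sub, Prod.snd_sub, smul_eq_mul] at h ⊢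
    obtain ⟨⟨h1, h2⟩, h3, h4⟩ := h
    rcases hc with ⟨rfl, rfl⟩ | ⟨rfl, rfl⟩ | ⟨rfl, rfl⟩ | ⟨rfl, rfl⟩ <;> push_cast at *
    · rcases le_total u (a + 1) with h | h
      · left; refine ⟨⟨?_, ?_⟩, ?_, ?_⟩ <;> linarith
      · right; refine ⟨⟨?_, ?_⟩, ?_, ?_⟩ <;> linarith
    · rcases le_total u a with h | h
      · right; refine ⟨⟨?_, ?_⟩, ?_, ?_⟩ <;> linarith
      · left; refine ⟨⟨?_, ?_⟩, ?_, ?_⟩ <;> linarith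
    · rcases le_total v (b + 1) with h | h
      · left; refine ⟨⟨?_, ?_⟩, ?_, ?_⟩ <;> linarith
      · right; refine ⟨⟨?_, ?_⟩, ?_, ?_⟩ <;> linarith
    · rcases le_total v b with h | h
      · right; refine ⟨⟨?_, ?_⟩, ?_, ?_⟩ <;> linarith
      · left; refine ⟨⟨?_, ?_⟩, ?_, ?_⟩ <;> linarith
  · rintro ⟨m, n⟩ hp hq
    rw [Set.eq_empty_iff_forall_notMem]
    rintro ⟨u, v⟩ ⟨h, h'⟩
    simp only [cell, interior_prod_eq, interior_Icc] at h
    simp only [cell, toR2, Set.mem_prod, Set.mem_Icc, Set.mem_Ioo, Prod.fst_add, Prod.snd_add,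
      Prod.smul_fst, Prod.smul_snd, Prod.fst_sub, Prod.snd_sub, smul_eq_mul] at h h'
    obtain ⟨⟨h1, h2⟩, h3, h4⟩ := h
    obtain ⟨⟨k1, k2⟩, k3, k4⟩ := h'
    simp only [ne_eq, Prod.mk.injEq] at hp hq
    rcases hc with ⟨rfl, rfl⟩ | ⟨rfl, rfl⟩ | ⟨rfl, rfl⟩ | ⟨rfl, rfl⟩ <;> push_cast at h1 h2 h3 h4
    · have e1 : m < a + 2 := by rify; linarith
      have e2 : a < m + 1 := by rify; linarith
      have e3 : n < d + 1 := by rify; linarith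
      have e4 : d < n + 1 := by rify; linarith
      omega
    · have e1 : m < a + 1 := by rify; linarith
      have e2 : a - 1 < m + 1 := by rify; linarith
      have e3 : n < d + 1 := by rify; linarith
      have e4 : d < n + 1 := by rify; linarith
      omega
    · have e1 : m < c + 1 := by rify; linarith
      have e2 : c < m + 1 := by rify; linarith
      have e3 : n < b + 2 := by rify; linarith
      have e4 : b < n + 1 := by rify; linarith
      omega
    · have e1 : m < c + 1 := by rify; linarith
      have e2 : c < m + 1 := by rify; linarith
      have e3 : n < b + 1 := by rify; linarith
      have e4 : b - 1 < n + 1 := by rify; linarith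
      omega
end

section
/- Let p₀, p₁, …, p_m ∈ ℤ² be a sequence with |(p_{i+1})₁ − (p_i)₁| + |(p_{i+1})₂ − (p_i)₂| = 1 for all 0 ≤ i < m (a walk in the grid graph on ℤ²), and let O ⊆ ℤ² be a set of occupied positions with O ∩ {p₀, …, p_m} = ∅. Then there exists a continuous map γ : [0, 1] → ℝ² with γ(0) = p₀ and γ(1) = p_m such that for every u ∈ [0, 1]: cell(γ(u)) ⊆ cell(p₀) ∪ cell(p₁) ∪ ⋯ ∪ cell(p_m), and the interior of cell(γ(u)) is disjoint from cell(r) for every r ∈ O. -/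
lemma motion_step_cases (a b : ℤ × ℤ) (h : |b.1 - a.1| + |b.2 - a.2| = 1) :
    (b.1 = a.1 + 1 ∧ b.2 = a.2) ∨ (b.1 = a.1 - 1 ∧ b.2 = a.2) ∨
    (b.1 = a.1 ∧ b.2 = a.2 + 1) ∨ (b.1 = a.1 ∧ b.2 = a.2 - 1) := by
  rcases abs_cases (b.1 - a.1) with h1 | h1 <;> rcases abs_cases (b.2 - a.2) with h2 | h2 <;> omega

lemma motion_step_subset (a b : ℤ × ℤ) (h : |b.1 - a.1| + |b.2 - a.2| = 1)
    (t : ℝ) (h0 : 0 ≤ t) (h1 : t ≤ 1) (x : ℝ × ℝ)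
    (hx1 : x.1 = a.1 + t * (b.1 - a.1)) (hx2 : x.2 = a.2 + t * (b.2 - a.2)) :
    cell x ⊆ cell (toR2 a) ∪ cell (toR2 b) := by
  rintro ⟨y1, y2⟩ hy
  simp only [cell, toR2, Set.mem_prod, Set.mem_Icc, Set.mem_union, hx1, hx2] at hy ⊢
  obtain ⟨⟨ha, hb⟩, hc, hd⟩ := hy
  rcases motion_step_cases a b h with ⟨e1, e2⟩ | ⟨e1, e2⟩ | ⟨e1, e2⟩ | ⟨e1, e2⟩ <;>
    rw [e1] at ha hb ⊢ <;> rw [e2] at hc hd ⊢ <;> push_cast at ha hb hc hd ⊢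
  · rcases le_total y1 (a.1 + 1) with h | h
    · left; refine ⟨⟨?_, ?_⟩, ?_, ?_⟩ <;> linarith
    · right; refine ⟨⟨?_, ?_⟩, ?_, ?_⟩ <;> linarith
  · rcases le_total y1 a.1 with h | h
    · right; refine ⟨⟨?_, ?_⟩, ?_, ?_⟩ <;> linarith
    · left; refine ⟨⟨?_, ?_⟩, ?_, ?_⟩ <;> linarith
  · rcases le_total y2 (a.2 + 1) with h | h
    · left; refine ⟨⟨?_, ?_⟩, ?_, ?_⟩ <;> linarith
    · right; refine ⟨⟨?_, ?_⟩, ?_, ?_⟩ <;> linarith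
  · rcases le_total y2 a.2 with h | h
    · right; refine ⟨⟨?_, ?_⟩, ?_, ?_⟩ <;> linarith
    · left; refine ⟨⟨?_, ?_⟩, ?_, ?_⟩ <;> linarith

lemma motion_step_disjoint (a b : ℤ × ℤ) (h : |b.1 - a.1| + |b.2 - a.2| = 1)
    (t : ℝ) (h0 : 0 ≤ t) (h1 : t ≤ 1) (x : ℝ × ℝ)
    (hx1 : x.1 = a.1 + t * (b.1 - a.1)) (hx2 : x.2 = a.2 + t * (b.2 - a.2))
    (r : ℤ × ℤ) (hra : a ≠ r) (hrb : b ≠ r) :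
    interior (cell x) ∩ cell (toR2 r) = ∅ := by
  rw [Set.eq_empty_iff_forall_notMem]
  rintro ⟨y1, y2⟩ ⟨hy, hz⟩
  simp only [cell, toR2, interior_prod_eq, interior_Icc, Set.mem_prod, Set.mem_Icc, Set.mem_Ioo,
    hx1, hx2] at hy hz
  obtain ⟨⟨ha, hb⟩, hc, hd⟩ := hy
  obtain ⟨⟨ka, kb⟩, kc, kd⟩ := hz
  rw [Ne, Prod.ext_iff] at hra hrb
  rcases motion_step_cases a b h with ⟨e1, e2⟩ | ⟨e1, e2⟩ | ⟨e1, e2⟩ | ⟨e1, e2⟩ <;>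
    rw [e1] at ha hb <;> rw [e2] at hc hd <;> push_cast at ha hb hc hd
  · have i1 : r.1 < a.1 + 2 := by rify; linarith
    have i2 : a.1 < r.1 + 1 := by rify; linarith
    have i3 : r.2 < a.2 + 1 := by rify; linarith
    have i4 : a.2 < r.2 + 1 := by rify; linarith
    omega
  · have i1 : r.1 < a.1 + 1 := by rify; linarith
    have i2 : a.1 < r.1 + 2 := by rify; linarith
    have i3 : r.2 < a.2 + 1 := by rify; linarith
    have i4 : a.2 < r.2 + 1 := by rify; linarith
    omega
  · have i1 : r.1 < a.1 + 1 := by rify; linarith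
    have i2 : a.1 < r.1 + 1 := by rify; linarith
    have i3 : r.2 < a.2 + 2 := by rify; linarith
    have i4 : a.2 < r.2 + 1 := by rify; linarith
    omega
  · have i1 : r.1 < a.1 + 1 := by rify; linarith
    have i2 : a.1 < r.1 + 1 := by rify; linarith
    have i3 : r.2 < a.2 + 1 := by rify; linarith
    have i4 : a.2 < r.2 + 2 := by rify; linarith
    omega

lemma motion_start_disjoint (a r : ℤ × ℤ) (hra : a ≠ r) :
    interior (cell (toR2 a)) ∩ cell (toR2 r) = ∅ := by
  rw [Set.eq_empty_iff_forall_notMem]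
  rintro ⟨y1, y2⟩ ⟨hy, hz⟩
  simp only [cell, toR2, interior_prod_eq, interior_Icc, Set.mem_prod, Set.mem_Icc,
    Set.mem_Ioo] at hy hz
  obtain ⟨⟨ha, hb⟩, hc, hd⟩ := hy
  obtain ⟨⟨ka, kb⟩, kc, kd⟩ := hz
  rw [Ne, Prod.ext_iff] at hra
  have i1 : r.1 < a.1 + 1 := by rify; linarith
  have i2 : a.1 < r.1 + 1 := by rify; linarith
  have i3 : r.2 < a.2 + 1 := by rify; linarith
  have i4 : a.2 < r.2 + 1 := by rify; linarith
  omega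

/-- A walk `p 0, …, p m` in the grid graph on `ℤ²` avoiding a set `O` of occupied
positions yields a continuous motion `γ` of a unit square from `p 0` to `p m` that stays
inside the union of the cells of the walk and whose interior never meets an occupied cell. -/
theorem walk_to_continuous_motion
    (m : ℕ) (p : Fin (m + 1) → ℤ × ℤ)
    (hadj : ∀ i : Fin m,
      |(p i.succ).1 - (p i.castSucc).1| + |(p i.succ).2 - (p i.castSucc).2| = 1)
    (O : Set (ℤ × ℤ)) (hO : ∀ i : Fin (m + 1), p i ∉ O) :
    ∃ γ : ℝ → ℝ × ℝ, ContinuousOn γ (Set.Icc 0 1) ∧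
      γ 0 = toR2 (p 0) ∧ γ 1 = toR2 (p (Fin.last m)) ∧
      ∀ u ∈ Set.Icc (0 : ℝ) 1,
        (cell (γ u) ⊆ ⋃ i : Fin (m + 1), cell (toR2 (p i))) ∧
        ∀ r ∈ O, interior (cell (γ u)) ∩ cell (toR2 r) = ∅ := by
  set S : Set (ℝ × ℝ) := {x | (cell x ⊆ ⋃ i : Fin (m + 1), cell (toR2 (p i))) ∧
    ∀ r ∈ O, interior (cell x) ∩ cell (toR2 r) = ∅} with hS
  have hne : ∀ i, ∀ r ∈ O, p i ≠ r := fun i r hr h => hO i (h ▸ hr)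
  have key : ∀ i : Fin (m + 1), JoinedIn S (toR2 (p 0)) (toR2 (p i)) := by
    intro i
    induction i using Fin.induction with
    | zero =>
      exact JoinedIn.refl ⟨Set.subset_iUnion (fun i => cell (toR2 (p i))) 0,
        fun r hr => motion_start_disjoint _ _ (hne 0 r hr)⟩
    | succ i ih =>
      refine ih.trans (JoinedIn.of_segment_subset ?_)
      intro x hx
      rw [segment_eq_image'] at hx
      obtain ⟨t, ⟨h0, h1⟩, rfl⟩ := hx
      refine ⟨(motion_step_subset _ _ (hadj i) t h0 h1 _ (by simp [toR2]) (by simp [toR2])).trans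
        (Set.union_subset (Set.subset_iUnion (fun i => cell (toR2 (p i))) _)
          (Set.subset_iUnion (fun i => cell (toR2 (p i))) _)), fun r hr => ?_⟩
      exact motion_step_disjoint _ _ (hadj i) t h0 h1 _ (by simp [toR2]) (by simp [toR2]) r
        (hne _ r hr) (hne _ r hr)
  obtain ⟨γ, hγ⟩ := key (Fin.last m)
  refine ⟨γ.extend, γ.continuous_extend.continuousOn, γ.extend_zero, γ.extend_one, ?_⟩
  intro u hu
  rw [γ.extend_apply hu]
  exact hγ ⟨u, hu⟩
end

section
/- Let S, T ⊆ ℤ² be finite sets with |S| = |T| = n. Then there exist bijective enumerations s₁, …, sₙ of S and t₁, …, tₙ of T, and continuous maps γᵢ : [0, 1] → ℝ² with γᵢ(0) = sᵢ and γᵢ(1) = tᵢ for each i, such that for every i and every u ∈ [0, 1], the interior of cell(γᵢ(u)) is disjoint from cell(s_j) for all j > i and disjoint from cell(t_j) for all j < i. (Thus n unit squares starting on the cells of S can be moved one at a time, each moving exactly once along a continuous collision-free path, to occupy exactly the cells of T.) -/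
/-- One-dimensional version: chips on the integer line. -/
theorem line_reconf (n : ℕ) : ∀ (A B : Finset ℤ), A.card = n → B.card = n →
    ∃ s t : Fin n → ℤ, (∀ v, v ∈ A ↔ ∃ i, s i = v) ∧ (∀ v, v ∈ B ↔ ∃ i, t i = v) ∧
      ∀ i j : Fin n, (i < j → s j < min (s i) (t i) ∨ max (s i) (t i) < s j) ∧
        (j < i → t j < min (s i) (t i) ∨ max (s i) (t i) < t j) := by
  induction n with
  | zero =>
    intro A B hA hB
    rw [Finset.card_eq_zero] at hA hB
    subst hA hB
    exact ⟨Fin.elim0, Fin.elim0, by simp, by simp, fun i => i.elim0⟩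
  | succ n ih =>
    intro A B hA hB
    have hAn : A.Nonempty := Finset.card_pos.1 (by omega)
    have hBn : B.Nonempty := Finset.card_pos.1 (by omega)
    obtain ⟨a, haA, ha⟩ : ∃ a ∈ A, ∀ x ∈ A, x ≤ a :=
      ⟨A.max' hAn, A.max'_mem hAn, fun x hx => A.le_max' x hx⟩
    obtain ⟨b, hbB, hb⟩ : ∃ b ∈ B, ∀ x ∈ B, x ≤ b :=
      ⟨B.max' hBn, B.max'_mem hBn, fun x hx => B.le_max' x hx⟩
    obtain ⟨s, t, hs, ht, hst⟩ := ih (A.erase a) (B.erase b)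
      (by rw [Finset.card_erase_of_mem haA]; omega) (by rw [Finset.card_erase_of_mem hbB]; omega)
    have hsa : ∀ i, s i < a := fun i => by
      have h := (hs (s i)).2 ⟨i, rfl⟩
      rw [Finset.mem_erase] at h
      exact lt_of_le_of_ne (ha _ h.2) h.1
    have htb : ∀ i, t i < b := fun i => by
      have h := (ht (t i)).2 ⟨i, rfl⟩
      rw [Finset.mem_erase] at h
      exact lt_of_le_of_ne (hb _ h.2) h.1
    have hA' : ∀ v, v ∈ A ↔ v = a ∨ ∃ i, s i = v := fun v => by
      rw [← hs, Finset.mem_erase]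
      by_cases h : v = a
      · simp [h, haA]
      · simp [h]
    have hB' : ∀ v, v ∈ B ↔ v = b ∨ ∃ i, t i = v := fun v => by
      rw [← ht, Finset.mem_erase]
      by_cases h : v = b
      · simp [h, hbB]
      · simp [h]
    rcases le_or_gt a b with hab | hab
    · refine ⟨Fin.cons a s, Fin.cons b t, ?_, ?_, ?_⟩
      · intro v
        rw [hA', Fin.exists_fin_succ]
        simp [eq_comm]
      · intro v
        rw [hB', Fin.exists_fin_succ]
        simp [eq_comm]
      · intro i j
        refine Fin.cases ?_ (fun i => ?_) i <;> refine Fin.cases ?_ (fun j => ?_) j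
        · simp
        · have := hsa j
          simp
          omega
        · have := hsa i
          have := htb i
          simp
          omega
        · simpa using hst i j
    · refine ⟨Fin.snoc s a, Fin.snoc t b, ?_, ?_, ?_⟩
      · intro v
        rw [hA', Fin.exists_fin_succ']
        simp [eq_comm, or_comm]
      · intro v
        rw [hB', Fin.exists_fin_succ']
        simp [eq_comm, or_comm]
      · intro i j
        refine Fin.lastCases ?_ (fun i => ?_) i <;> refine Fin.lastCases ?_ (fun j => ?_) j
        · simp
        · have := htb j
          have h2 : ¬ (Fin.last n < j.castSucc) := not_lt.2 (Fin.le_last _)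
          simp [h2]
          omega
        · have := hsa i
          have := htb i
          have h2 : ¬ (Fin.last n < i.castSucc) := not_lt.2 (Fin.le_last _)
          simp [h2]
          omega
        · simpa using hst i j

/-- The square at `x` does not overlap the cell at `p`. -/
def IsFree (x : ℝ × ℝ) (p : ℤ × ℤ) : Prop :=
  (x.1 + 1 ≤ p.1 ∨ (p.1 : ℝ) + 1 ≤ x.1) ∨ (x.2 + 1 ≤ p.2 ∨ (p.2 : ℝ) + 1 ≤ x.2)

theorem IsFree.disj {x : ℝ × ℝ} {p : ℤ × ℤ} (h : IsFree x p) :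
    interior (cell x) ∩ cell (toR2 p) = ∅ := by
  ext z
  simp only [cell, toR2, interior_prod_eq, interior_Icc, Set.mem_inter_iff, Set.mem_prod,
    Set.mem_Ioo, Set.mem_Icc, Set.mem_empty_iff_false, iff_false]
  rintro ⟨⟨⟨h1, h2⟩, h3, h4⟩, ⟨h5, h6⟩, h7, h8⟩
  rcases h with (h | h) | (h | h) <;> linarith

/-- Grid adjacency. -/
def GAdj (p q : ℤ × ℤ) : Prop :=
  (p.2 = q.2 ∧ (q.1 = p.1 + 1 ∨ p.1 = q.1 + 1)) ∨ (p.1 = q.1 ∧ (q.2 = p.2 + 1 ∨ p.2 = q.2 + 1))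

theorem free_1d {a b m : ℤ} {l r : ℝ} (hl : 0 ≤ l) (hr : 0 ≤ r) (hlr : l + r = 1)
    (hab : b = a + 1 ∨ a = b + 1) (hma : m ≠ a) (hmb : m ≠ b) :
    (l * a + r * b + 1 ≤ m ∨ (m : ℝ) + 1 ≤ l * a + r * b) := by
  obtain rfl : l = 1 - r := by linarith
  rcases hab with rfl | rfl
  · rcases lt_or_gt_of_ne hma with h | h
    · right
      have : ((m + 1 : ℤ) : ℝ) ≤ a := by exact_mod_cast h
      push_cast at *
      nlinarith
    · left
      have : ((a + 2 : ℤ) : ℝ) ≤ m := by exact_mod_cast (by omega : a + 2 ≤ m)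
      push_cast at *
      nlinarith
  · rcases lt_or_gt_of_ne hmb with h | h
    · right
      have : ((m + 1 : ℤ) : ℝ) ≤ b := by exact_mod_cast h
      push_cast at *
      nlinarith
    · left
      have : ((b + 2 : ℤ) : ℝ) ≤ m := by exact_mod_cast (by omega : b + 2 ≤ m)
      push_cast at *
      nlinarith

theorem free_const {a m : ℤ} {l r : ℝ} (hlr : l + r = 1) (hma : m ≠ a) :
    (l * a + r * a + 1 ≤ m ∨ (m : ℝ) + 1 ≤ l * a + r * a) := by
  have e : l * a + r * a = (a : ℝ) := by rw [← add_mul, hlr, one_mul]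
  rw [e]
  rcases lt_or_gt_of_ne hma with h | h
  · right; exact_mod_cast h
  · left; exact_mod_cast h

theorem free_segment {p q m : ℤ × ℤ} (h : GAdj p q) (hp : m ≠ p) (hq : m ≠ q) {x : ℝ × ℝ}
    (hx : x ∈ segment ℝ (toR2 p) (toR2 q)) : IsFree x m := by
  obtain ⟨l, r, hl, hr, hlr, rfl⟩ := hx
  obtain ⟨p1, p2⟩ := p
  obtain ⟨q1, q2⟩ := q
  obtain ⟨m1, m2⟩ := m
  simp only [GAdj, IsFree, toR2, Prod.fst_add, Prod.snd_add, Prod.smul_mk, smul_eq_mul, ne_eq,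
    Prod.mk.injEq] at *
  rcases h with ⟨rfl, h⟩ | ⟨rfl, h⟩
  · by_cases hm : m2 = p2
    · exact Or.inl (free_1d hl hr hlr h (by tauto) (by tauto))
    · exact Or.inr (free_const hlr hm)
  · by_cases hm : m1 = p1
    · exact Or.inr (free_1d hl hr hlr h (by tauto) (by tauto))
    · exact Or.inl (free_const hlr hm)

theorem free_self {p m : ℤ × ℤ} (hp : m ≠ p) : IsFree (toR2 p) m := by
  by_cases h1 : m.1 = p.1
  · have h2 : m.2 ≠ p.2 := fun h => hp (Prod.ext h1 h)
    have := free_const (l := 1) (r := 0) (by norm_num) h2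
    right
    simpa [toR2] using this
  · have := free_const (l := 1) (r := 0) (by norm_num) h1
    left
    simpa [toR2] using this

theorem joined_aux (f : ℤ → ℤ × ℤ) (hf : Function.Injective f) (hadj : ∀ k, GAdj (f k) (f (k + 1)))
    (a : ℤ) (d : ℕ) : JoinedIn {x | ∀ m, (m < a ∨ a + d < m) → IsFree x (f m)}
      (toR2 (f a)) (toR2 (f (a + d))) := by
  induction d with
  | zero =>
    have : a + ((0 : ℕ) : ℤ) = a := by simp
    rw [this]
    refine JoinedIn.refl fun m hm => free_self fun h => ?_
    have := hf h
    omega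
  | succ d ih =>
    refine (ih.mono ?_).trans (JoinedIn.of_segment_subset ?_)
    · intro x hx m hm
      exact hx m (by push_cast at hm; omega)
    · intro x hx m hm
      push_cast at hm hx
      rw [← add_assoc] at hx
      exact free_segment (hadj _) (fun h => by have := hf h; omega)
        (fun h => by have := hf h; omega) hx

theorem joined_f (f : ℤ → ℤ × ℤ) (hf : Function.Injective f) (hadj : ∀ k, GAdj (f k) (f (k + 1)))
    (a b : ℤ) : JoinedIn {x | ∀ m, (m < min a b ∨ max a b < m) → IsFree x (f m)}
      (toR2 (f a)) (toR2 (f b)) := by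
  rcases le_total a b with h | h
  · obtain ⟨d, rfl⟩ := Int.le.dest h
    simpa only [min_eq_left h, max_eq_right h] using joined_aux f hf hadj a d
  · obtain ⟨d, rfl⟩ := Int.le.dest h
    simpa only [min_eq_right h, max_eq_left h] using (joined_aux f hf hadj b d).symm

/-- The boustrophedon path in a vertical strip. -/
theorem snake (c W : ℤ) (hW : 0 < W) : ∃ f : ℤ → ℤ × ℤ, Function.Injective f ∧
    (∀ k, GAdj (f k) (f (k + 1))) ∧ ∀ v : ℤ × ℤ, c ≤ v.1 → v.1 < c + W → ∃ k, f k = v := by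
  refine ⟨fun k => (c + if k / W % 2 = 0 then k % W else W - 1 - k % W, k / W), ?_, ?_, ?_⟩
  · intro k l h
    simp only [Prod.mk.injEq] at h
    obtain ⟨h1, h2⟩ := h
    rw [h2] at h1
    have h3 : k % W = l % W := by split_ifs at h1 <;> omega
    rw [← Int.mul_ediv_add_emod k W, ← Int.mul_ediv_add_emod l W, h2, h3]
  · intro k
    have e := Int.mul_ediv_add_emod k W
    have h0 := Int.emod_nonneg k hW.ne'
    have h1 := Int.emod_lt_of_pos k hW
    obtain ⟨q, hq⟩ : ∃ q, k / W = q := ⟨_, rfl⟩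
    obtain ⟨r, hr'⟩ : ∃ r, k % W = r := ⟨_, rfl⟩
    rw [hq, hr'] at e
    rw [hr'] at h0 h1
    by_cases hr : r = W - 1
    · have e1 : (k + 1) / W = q + 1 := by
        rw [← e, hr, show W * q + (W - 1) + 1 = W * (q + 1) by ring, Int.mul_ediv_cancel_left _ hW.ne']
      have e2 : (k + 1) % W = 0 := by
        rw [← e, hr, show W * q + (W - 1) + 1 = W * (q + 1) by ring, Int.mul_emod_right]
      simp only [e1, e2, hq, hr', GAdj]
      right
      simp only [true_or, true_and, and_true]
      split_ifs <;> omega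
    · have e1 : (k + 1) / W = q := by
        rw [← e, add_assoc, Int.mul_add_ediv_left _ _ hW.ne', Int.ediv_eq_zero_of_lt (by omega) (by omega), add_zero]
      have e2 : (k + 1) % W = r + 1 := by
        rw [← e, add_assoc, Int.mul_add_emod_self_left, Int.emod_eq_of_lt (by omega) (by omega)]
      simp only [e1, e2, hq, hr', GAdj]
      left
      simp only [true_or, true_and, and_true]
      split_ifs <;> omega
  · rintro ⟨x, y⟩ h1 h2
    simp only at h1 h2
    have key : ∀ r, 0 ≤ r → r < W → (W * y + r) / W = y ∧ (W * y + r) % W = r := by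
      intro r h0 h1
      constructor
      · rw [Int.mul_add_ediv_left _ _ hW.ne', Int.ediv_eq_zero_of_lt h0 h1, add_zero]
      · rw [Int.mul_add_emod_self_left, Int.emod_eq_of_lt h0 h1]
    by_cases hy : y % 2 = 0
    · obtain ⟨e1, e2⟩ := key (x - c) (by omega) (by omega)
      refine ⟨W * y + (x - c), ?_⟩
      simp only [e1, e2, hy, if_true, Prod.mk.injEq, and_true]
      omega
    · obtain ⟨e1, e2⟩ := key (W - 1 - (x - c)) (by omega) (by omega)
      refine ⟨W * y + (W - 1 - (x - c)), ?_⟩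
      simp only [e1, e2, hy, if_false, Prod.mk.injEq, and_true]
      omega

/-- Unlabeled unit squares at integer positions in the (unbounded) plane can always be
monotonically reconfigured: there are enumerations `s` of `S` and `t` of `T` and
continuous collision-free paths `γ i` from `s i` to `t i`, where path `i` avoids the
still-occupied cells `cell (s j)` for `j > i` and the already-filled target cells
`cell (t j)` for `j < i`. -/
theorem unlabeled_unit_squares_monotone_reconfiguration_unbounded
    (S T : Finset (ℤ × ℤ)) (n : ℕ) (hS : S.card = n) (hT : T.card = n) :
    ∃ (s t : Fin n → ℤ × ℤ),
      Function.Injective s ∧ Function.Injective t ∧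
      (∀ v : ℤ × ℤ, v ∈ S ↔ ∃ i : Fin n, s i = v) ∧
      (∀ v : ℤ × ℤ, v ∈ T ↔ ∃ i : Fin n, t i = v) ∧
      ∃ γ : Fin n → ℝ → ℝ × ℝ,
        ∀ i : Fin n, ContinuousOn (γ i) (Set.Icc 0 1) ∧
          γ i 0 = toR2 (s i) ∧ γ i 1 = toR2 (t i) ∧
          ∀ u ∈ Set.Icc (0 : ℝ) 1,
            (∀ j : Fin n, i < j → interior (cell (γ i u)) ∩ cell (toR2 (s j)) = ∅) ∧
            (∀ j : Fin n, j < i → interior (cell (γ i u)) ∩ cell (toR2 (t j)) = ∅) := by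
  obtain ⟨M, hM⟩ : ∃ M : ℤ, ∀ v ∈ S ∪ T, |v.1| ≤ M := by
    obtain ⟨M, hM⟩ := ((S ∪ T).image fun v => |v.1|).bddAbove
    exact ⟨M, fun v hv => hM (Finset.mem_coe.2 (Finset.mem_image_of_mem _ hv))⟩
  obtain ⟨f, hf, hadj, hsurj⟩ := snake (-|M|) (2 * |M| + 1) (by positivity)
  have hcov : ∀ v ∈ S ∪ T, ∃ k, f k = v := fun v hv => by
    have h1 := abs_le.1 ((hM v hv).trans (le_abs_self M))
    exact hsurj v h1.1 (by omega)
  have pre : ∀ U : Finset (ℤ × ℤ), U ⊆ S ∪ T → ∃ A : Finset ℤ, A.image f = U := fun U hU => by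
    refine ⟨U.preimage f hf.injOn, ?_⟩
    ext v
    simp only [Finset.mem_image, Finset.mem_preimage]
    constructor
    · rintro ⟨k, hk, rfl⟩; exact hk
    · intro hv
      obtain ⟨k, rfl⟩ := hcov v (hU hv)
      exact ⟨k, hv, rfl⟩
  obtain ⟨A, rfl⟩ := pre S Finset.subset_union_left
  obtain ⟨B, rfl⟩ := pre T Finset.subset_union_right
  rw [Finset.card_image_of_injective _ hf] at hS hT
  obtain ⟨s, t, hs, ht, hst⟩ := line_reconf n A B hS hT
  have inj : ∀ (C : Finset ℤ) (w : Fin n → ℤ), C.card = n → (∀ v, v ∈ C ↔ ∃ i, w i = v) →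
      Function.Injective w := fun C w hC hw => by
    have e : Finset.univ.image w = C := by ext v; simp [hw]
    have := (Finset.card_image_iff (s := Finset.univ) (f := w)).1 (by rw [e, hC]; simp)
    simpa using this
  have hj := fun i => joined_f f hf hadj (s i) (t i)
  refine ⟨f ∘ s, f ∘ t, hf.comp (inj A s hS hs), hf.comp (inj B t hT ht), ?_, ?_,
    fun i => (hj i).somePath.extend, fun i => ⟨(Path.continuous_extend _).continuousOn,
      by simp, by simp, fun u hu => ?_⟩⟩
  · intro v
    simp [hs]
  · intro v
    simp [ht]
  · have hmem := (hj i).somePath_mem ⟨u, hu⟩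
    beta_reduce
    rw [Path.extend_apply _ hu]
    exact ⟨fun j hij => (hmem _ ((hst i j).1 hij)).disj, fun j hij => (hmem _ ((hst i j).2 hij)).disj⟩
end

section
/- Let C ⊆ ℤ² be a finite set such that the grid graph on C is connected, and let D = ⋃_{c ∈ C} cell(c). Let S, T ⊆ C with |S| = |T| = n. Then there exist bijective enumerations s₁, …, sₙ of S and t₁, …, tₙ of T, and continuous maps γᵢ : [0, 1] → ℝ² with γᵢ(0) = sᵢ and γᵢ(1) = tᵢ for each i, such that for every i and every u ∈ [0, 1]: cell(γᵢ(u)) ⊆ D, the interior of cell(γᵢ(u)) is disjoint from cell(s_j) for all j > i, and the interior of cell(γᵢ(u)) is disjoint from cell(t_j) for all j < i. -/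
/-- Two integer grid points are adjacent in the grid graph if their L¹-distance is 1. -/
def gridAdj (a b : ℤ × ℤ) : Prop := |a.1 - b.1| + |a.2 - b.2| = 1

/-- Reachability in the grid graph on the vertex set `C ⊆ ℤ²`. -/
def gridReach (C : Set (ℤ × ℤ)) : ℤ × ℤ → ℤ × ℤ → Prop :=
  Relation.ReflTransGen (fun a b => a ∈ C ∧ b ∈ C ∧ gridAdj a b)

lemma gridAdj_symm {a b : ℤ × ℤ} (h : gridAdj a b) : gridAdj b a := by
  unfold gridAdj at *
  rw [abs_sub_comm b.1, abs_sub_comm b.2]; exact h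

lemma gridReach_mono {A B : Set (ℤ × ℤ)} (h : A ⊆ B) {a b : ℤ × ℤ} (hr : gridReach A a b) :
    gridReach B a b := by
  induction hr with
  | refl => exact Relation.ReflTransGen.refl
  | tail _ hx ih => exact Relation.ReflTransGen.tail ih ⟨h hx.1, h hx.2.1, hx.2.2⟩

lemma gridReach_symm {A : Set (ℤ × ℤ)} {a b : ℤ × ℤ} (hr : gridReach A a b) :
    gridReach A b a := by
  induction hr with
  | refl => exact Relation.ReflTransGen.refl
  | tail _ h ih => exact Relation.ReflTransGen.head ⟨h.2.1, h.1, gridAdj_symm h.2.2⟩ ih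

/-- Connectedness of a finite set of grid points. -/
def GConn (C : Finset (ℤ × ℤ)) : Prop := ∀ p ∈ C, ∀ q ∈ C, gridReach (↑C) p q

lemma exists_exit_edge {C B : Finset (ℤ × ℤ)} {p q : ℤ × ℤ} (h : gridReach (↑C) p q)
    (hp : p ∈ B) (hq : q ∉ B) : ∃ u ∈ B, ∃ w ∈ C, w ∉ B ∧ gridAdj u w := by
  induction h with
  | refl => exact absurd hp hq
  | @tail b c _ h ih =>
    by_cases hb : b ∈ B
    · exact ⟨b, hb, c, h.2.1, hq, h.2.2⟩
    · exact ih hb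

lemma GConn.insert_adj {B : Finset (ℤ × ℤ)} (hB : GConn B) {u w : ℤ × ℤ} (hu : u ∈ B)
    (h : gridAdj u w) : GConn (insert w B) := by
  have key : ∀ p ∈ insert w B, gridReach (↑(insert w B)) p u := by
    intro p hp
    rcases Finset.mem_insert.1 hp with rfl | hp
    · exact Relation.ReflTransGen.single ⟨by simp, by simp [hu], gridAdj_symm h⟩
    · exact gridReach_mono (by simp) (hB p hp u hu)
  intro p hp q hq
  exact Relation.ReflTransGen.trans (key p hp) (gridReach_symm (key q hq))

/-- A nonempty connected set has a non-cut vertex. -/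
lemma exists_noncut_s4 {C : Finset (ℤ × ℤ)} (hC : GConn C) (hne : C.Nonempty) :
    ∃ v ∈ C, GConn (C.erase v) := by
  classical
  have hfin : (C.ssubsets.filter GConn).Nonempty :=
    ⟨∅, by simp [Finset.mem_ssubsets, hne, GConn]⟩
  obtain ⟨B, hB, hmax⟩ := Finset.exists_max_image _ Finset.card hfin
  simp only [Finset.mem_filter, Finset.mem_ssubsets] at hB hmax
  obtain ⟨hBC, hBconn⟩ := hB
  obtain ⟨q, hqC, hqB⟩ := Finset.exists_of_ssubset hBC
  have main : ∃ w ∈ C, w ∉ B ∧ GConn (insert w B) := by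
    rcases B.eq_empty_or_nonempty with rfl | ⟨p, hp⟩
    · refine ⟨q, hqC, hqB, ?_⟩
      intro a ha b hb
      simp at ha hb
      subst ha; subst hb
      exact Relation.ReflTransGen.refl
    · obtain ⟨u, hu, w, hw, hwB, hadj⟩ := exists_exit_edge (hC p (hBC.1 hp) q hqC) hp hqB
      exact ⟨w, hw, hwB, hBconn.insert_adj hu hadj⟩
  obtain ⟨w, hw, hwB, hcon⟩ := main
  have hEq : insert w B = C := by
    by_contra hne'
    have hss : insert w B ⊂ C :=
      (Finset.insert_subset hw hBC.1).ssubset_of_ne hne'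
    have := hmax _ ⟨hss, hcon⟩
    rw [Finset.card_insert_of_notMem hwB] at this
    omega
  refine ⟨w, hw, ?_⟩
  rw [← hEq, Finset.erase_insert hwB]
  exact hBconn

/-- A vertex of `S` which can reach `v` without meeting other vertices of `S`. -/
lemma exists_closest {C S : Finset (ℤ × ℤ)} {a v : ℤ × ℤ} (h : gridReach (↑C) a v)
    (ha : a ∈ S) (hv : v ∈ C) :
    ∃ s ∈ S, gridReach {c | c ∈ C ∧ c ∉ S.erase s} s v := by
  have key : (∃ s ∈ S, gridReach {c | c ∈ C ∧ c ∉ S.erase s} s v) ∨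
      (a ∉ S ∧ gridReach {c | c ∈ C ∧ c ∉ S} a v) := by
    clear ha
    induction h using Relation.ReflTransGen.head_induction_on with
    | refl =>
      by_cases hvS : v ∈ S
      · exact Or.inl ⟨v, hvS, Relation.ReflTransGen.refl⟩
      · exact Or.inr ⟨hvS, Relation.ReflTransGen.refl⟩
    | @head a c hac _ ih =>
      rcases ih with ih | ⟨hcS, hcv⟩
      · exact Or.inl ih
      · by_cases haS : a ∈ S
        · refine Or.inl ⟨a, haS, Relation.ReflTransGen.head (b := c) ⟨⟨hac.1, by simp⟩,
            ⟨hac.2.1, fun h => hcS (Finset.mem_of_mem_erase h)⟩, hac.2.2⟩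
            (gridReach_mono ?_ hcv)⟩
          intro x hx
          exact ⟨hx.1, fun h => hx.2 (Finset.mem_of_mem_erase h)⟩
        · exact Or.inr ⟨haS, Relation.ReflTransGen.head
            ⟨⟨hac.1, haS⟩, ⟨hac.2.1, hcS⟩, hac.2.2⟩ hcv⟩
  rcases key with h | h
  · exact h
  · exact absurd ha h.1

/-- Cells free for the `i`-th move. -/
def freeSet (C : Finset (ℤ × ℤ)) {n : ℕ} (s t : Fin n → ℤ × ℤ) (i : Fin n) : Set (ℤ × ℤ) :=
  {c | c ∈ C ∧ (∀ j, i < j → c ≠ s j) ∧ (∀ j, j < i → c ≠ t j)}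

/-- Discrete plan. -/
def Plan (C S T : Finset (ℤ × ℤ)) (n : ℕ) : Prop :=
  ∃ s t : Fin n → ℤ × ℤ, Function.Injective s ∧ Function.Injective t ∧
    (∀ v, v ∈ S ↔ ∃ i, s i = v) ∧ (∀ v, v ∈ T ↔ ∃ i, t i = v) ∧
    ∀ i, s i ∈ freeSet C s t i ∧ t i ∈ freeSet C s t i ∧ gridReach (freeSet C s t i) (s i) (t i)

lemma freeSet_rev (C : Finset (ℤ × ℤ)) {n : ℕ} (s t : Fin n → ℤ × ℤ) (i : Fin n) :
    freeSet C (t ∘ Fin.rev) (s ∘ Fin.rev) i = freeSet C s t i.rev := by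
  ext c
  simp only [freeSet, Set.mem_ofPred_eq, Function.comp]
  constructor
  · rintro ⟨h, h1, h2⟩
    refine ⟨h, fun j hj => ?_, fun j hj => ?_⟩
    · have := h2 j.rev (by rw [← Fin.rev_lt_rev, Fin.rev_rev]; exact hj)
      simpa using this
    · have := h1 j.rev (by rw [← Fin.rev_lt_rev, Fin.rev_rev]; exact hj)
      simpa using this
  · rintro ⟨h, h1, h2⟩
    exact ⟨h, fun j hj => h2 _ (Fin.rev_lt_rev.2 hj), fun j hj => h1 _ (Fin.rev_lt_rev.2 hj)⟩

lemma Plan.symm {C S T : Finset (ℤ × ℤ)} {n : ℕ} (h : Plan C S T n) : Plan C T S n := by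
  obtain ⟨s, t, hs, ht, hS, hT, hm⟩ := h
  refine ⟨t ∘ Fin.rev, s ∘ Fin.rev, ht.comp Fin.rev_injective, hs.comp Fin.rev_injective,
    ?_, ?_, ?_⟩
  · intro v
    rw [hT]
    exact ⟨fun ⟨i, hi⟩ => ⟨i.rev, by simpa using hi⟩, fun ⟨i, hi⟩ => ⟨i.rev, hi⟩⟩
  · intro v
    rw [hS]
    exact ⟨fun ⟨i, hi⟩ => ⟨i.rev, by simpa using hi⟩, fun ⟨i, hi⟩ => ⟨i.rev, hi⟩⟩
  · intro i
    rw [freeSet_rev]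
    exact ⟨(hm i.rev).2.1, (hm i.rev).1, gridReach_symm (hm i.rev).2.2⟩

/-- Prepend a move ending in the vertex `v`. -/
lemma Plan.cons {C S T : Finset (ℤ × ℤ)} {n : ℕ} {v a : ℤ × ℤ} (hv : v ∈ C) (hSC : S ⊆ C)
    (ha : a ∈ S) (hvT : v ∈ T) (hvS : v ∉ S.erase a)
    (hr : gridReach {c | c ∈ C ∧ c ∉ S.erase a} a v)
    (h : Plan (C.erase v) (S.erase a) (T.erase v) n) : Plan C S T (n + 1) := by
  obtain ⟨s, t, hs, ht, hS, hT, hm⟩ := h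
  have hsS : ∀ i, s i ∈ S.erase a := fun i => (hS _).2 ⟨i, rfl⟩
  have htT : ∀ i, t i ∈ T.erase v := fun i => (hT _).2 ⟨i, rfl⟩
  have hF0 : {c | c ∈ C ∧ c ∉ S.erase a} ⊆
      freeSet C (Fin.cons a s : Fin (n+1) → ℤ × ℤ) (Fin.cons v t) 0 := by
    rintro c ⟨hc, hcS⟩
    refine ⟨hc, fun j hj => ?_, fun j hj => absurd hj (Fin.not_lt_zero j)⟩
    obtain ⟨k, rfl⟩ := Fin.exists_succ_eq.2 hj.ne'
    rintro rfl
    exact hcS (by simpa only [Fin.cons_succ] using hsS k)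
  have hFs : ∀ i, freeSet (C.erase v) s t i ⊆
      freeSet C (Fin.cons a s : Fin (n+1) → ℤ × ℤ) (Fin.cons v t) i.succ := by
    rintro i c ⟨hc, h1, h2⟩
    refine ⟨Finset.mem_of_mem_erase hc, fun j hj => ?_, fun j hj => ?_⟩
    · obtain ⟨k, rfl⟩ := Fin.exists_succ_eq.2 (Fin.ne_zero_of_lt hj)
      rw [Fin.cons_succ]
      exact h1 k (Fin.succ_lt_succ_iff.1 hj)
    · cases j using Fin.cases with
      | zero => rw [Fin.cons_zero]; exact Finset.ne_of_mem_erase hc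
      | succ k =>
        rw [Fin.cons_succ]
        exact h2 k (Fin.succ_lt_succ_iff.1 hj)
  refine ⟨Fin.cons a s, Fin.cons v t, ?_, ?_, ?_, ?_, ?_⟩
  · rw [Fin.cons_injective_iff]
    exact ⟨fun ⟨i, hi⟩ => Finset.ne_of_mem_erase (hsS i) hi, hs⟩
  · rw [Fin.cons_injective_iff]
    exact ⟨fun ⟨i, hi⟩ => Finset.ne_of_mem_erase (htT i) hi, ht⟩
  · intro x
    rw [Fin.exists_fin_succ]
    simp only [Fin.cons_zero, Fin.cons_succ]
    rw [← hS]
    by_cases hx : a = x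
    · subst hx; simp [ha]
    · simp [hx, Ne.symm hx, Finset.mem_erase]
  · intro x
    rw [Fin.exists_fin_succ]
    simp only [Fin.cons_zero, Fin.cons_succ]
    rw [← hT]
    by_cases hx : v = x
    · subst hx; simp [hvT]
    · simp [hx, Ne.symm hx, Finset.mem_erase]
  · intro i
    cases i using Fin.cases with
    | zero =>
      simp only [Fin.cons_zero]
      exact ⟨hF0 ⟨hSC ha, by simp⟩, hF0 ⟨hv, hvS⟩, gridReach_mono hF0 hr⟩
    | succ k =>
      simp only [Fin.cons_succ]
      exact ⟨hFs k (hm k).1, hFs k (hm k).2.1, gridReach_mono (hFs k) (hm k).2.2⟩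

lemma Plan.mono {C C' S T : Finset (ℤ × ℤ)} {n : ℕ} (hC : C' ⊆ C) (h : Plan C' S T n) :
    Plan C S T n := by
  obtain ⟨s, t, hs, ht, hS, hT, hm⟩ := h
  have hF : ∀ i, freeSet C' s t i ⊆ freeSet C s t i := fun i c hc => ⟨hC hc.1, hc.2⟩
  exact ⟨s, t, hs, ht, hS, hT, fun i =>
    ⟨hF i (hm i).1, hF i (hm i).2.1, gridReach_mono (hF i) (hm i).2.2⟩⟩

lemma exists_plan (k : ℕ) : ∀ (C S T : Finset (ℤ × ℤ)) (n : ℕ), C.card = k → GConn C →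
    S ⊆ C → T ⊆ C → S.card = n → T.card = n → Plan C S T n := by
  induction k with
  | zero =>
    intro C S T n hk _ hS hT hn hn'
    obtain rfl := Finset.card_eq_zero.1 hk
    obtain rfl := Finset.subset_empty.1 hS
    obtain rfl := Finset.subset_empty.1 hT
    simp at hn
    subst hn
    exact ⟨Fin.elim0, Fin.elim0, fun i => i.elim0, fun i => i.elim0, by simp, by simp,
      fun i => i.elim0⟩
  | succ k ih =>
    intro C S T n hk hC hS hT hn hn'
    obtain ⟨v, hv, hcon⟩ := exists_noncut_s4 hC (Finset.card_pos.1 (by omega))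
    have hck : (C.erase v).card = k := by rw [Finset.card_erase_of_mem hv]; omega
    -- the case where `v` is a target only
    have main : ∀ S T : Finset (ℤ × ℤ), S ⊆ C → T ⊆ C → S.card = n → T.card = n →
        v ∈ T → v ∉ S → Plan C S T n := by
      intro S T hS hT hn hn' hvT hvS
      have hpos : 0 < T.card := Finset.card_pos.2 ⟨v, hvT⟩
      obtain ⟨m, rfl⟩ : ∃ m, n = m + 1 := ⟨n - 1, by omega⟩
      obtain ⟨b, hb⟩ : S.Nonempty := Finset.card_pos.1 (by omega)
      obtain ⟨a, ha, hr⟩ := exists_closest (hC b (hS hb) v hv) hb hv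
      refine Plan.cons hv hS ha hvT (fun h => hvS (Finset.mem_of_mem_erase h)) hr
        (ih _ _ _ _ hck hcon ?_ (Finset.erase_subset_erase v hT) ?_ ?_)
      · intro x hx
        have hx' := Finset.mem_of_mem_erase hx
        exact Finset.mem_erase.2 ⟨fun h => hvS (h ▸ hx'), hS hx'⟩
      · rw [Finset.card_erase_of_mem ha]; omega
      · rw [Finset.card_erase_of_mem hvT]; omega
    by_cases hvS : v ∈ S <;> by_cases hvT : v ∈ T
    · have hpos : 0 < T.card := Finset.card_pos.2 ⟨v, hvT⟩
      obtain ⟨m, rfl⟩ : ∃ m, n = m + 1 := ⟨n - 1, by omega⟩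
      refine Plan.cons hv hS hvS hvT (by simp) Relation.ReflTransGen.refl
        (ih _ _ _ _ hck hcon (Finset.erase_subset_erase v hS) (Finset.erase_subset_erase v hT)
          ?_ ?_)
      · rw [Finset.card_erase_of_mem hvS]; omega
      · rw [Finset.card_erase_of_mem hvT]; omega
    · exact (main T S hT hS hn' hn hvS hvT).symm
    · exact main S T hS hT hn hn' hvT hvS
    · exact Plan.mono (Finset.erase_subset v C) (ih _ _ _ _ hck hcon
        (Finset.subset_erase.2 ⟨hS, hvS⟩) (Finset.subset_erase.2 ⟨hT, hvT⟩) hn hn')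

/-- Admissible positions for a moving square. -/
def posSet (A : Set (ℤ × ℤ)) : Set (ℝ × ℝ) :=
  {x | cell x ⊆ ⋃ c ∈ A, cell (toR2 c) ∧
    ∀ c, c ∉ A → interior (cell x) ∩ cell (toR2 c) = ∅}

lemma interior_cell (x : ℝ × ℝ) :
    interior (cell x) = Set.Ioo x.1 (x.1 + 1) ×ˢ Set.Ioo x.2 (x.2 + 1) := by
  rw [cell, interior_prod_eq, interior_Icc, interior_Icc]

lemma mem_posSet_h {A : Set (ℤ × ℤ)} {p q : ℤ} (ha : (p, q) ∈ A) (hb : (p + 1, q) ∈ A)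
    {θ : ℝ} (h0 : 0 ≤ θ) (h1 : θ ≤ 1) : ((p : ℝ) + θ, (q : ℝ)) ∈ posSet A := by
  constructor
  · rintro ⟨y, z⟩ hy
    simp only [cell, Set.mem_prod, Set.mem_Icc] at hy
    simp only [Set.mem_iUnion, cell, toR2, Set.mem_prod, Set.mem_Icc]
    by_cases hyp : y ≤ p + 1
    · exact ⟨(p, q), ha, ⟨by simp; linarith, by simpa using hyp⟩, by simpa using hy.2⟩
    · refine ⟨(p + 1, q), hb, ⟨by push_cast; linarith, by push_cast; linarith⟩, by simpa using hy.2⟩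
  · rintro ⟨c, d⟩ hc
    rw [interior_cell, Set.eq_empty_iff_forall_notMem]
    rintro ⟨y, z⟩ ⟨hy, hy'⟩
    simp only [cell, toR2, Set.mem_prod, Set.mem_Icc, Set.mem_Ioo] at hy hy'
    obtain ⟨⟨e1, e2⟩, e3, e4⟩ := hy
    obtain ⟨⟨f1, f2⟩, f3, f4⟩ := hy'
    have g1 : c < p + 2 := by exact_mod_cast (by push_cast; linarith : (c : ℝ) < ((p + 2 : ℤ) : ℝ))
    have g2 : p < c + 1 := by exact_mod_cast (by push_cast; linarith : (p : ℝ) < ((c + 1 : ℤ) : ℝ))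
    have g3 : d < q + 1 := by exact_mod_cast (by push_cast; linarith : (d : ℝ) < ((q + 1 : ℤ) : ℝ))
    have g4 : q < d + 1 := by exact_mod_cast (by push_cast; linarith : (q : ℝ) < ((d + 1 : ℤ) : ℝ))
    obtain rfl : d = q := by omega
    obtain rfl | rfl : c = p ∨ c = p + 1 := by omega
    · exact hc ha
    · exact hc hb

lemma mem_posSet_v {A : Set (ℤ × ℤ)} {p q : ℤ} (ha : (p, q) ∈ A) (hb : (p, q + 1) ∈ A)
    {θ : ℝ} (h0 : 0 ≤ θ) (h1 : θ ≤ 1) : ((p : ℝ), (q : ℝ) + θ) ∈ posSet A := by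
  constructor
  · rintro ⟨y, z⟩ hy
    simp only [cell, Set.mem_prod, Set.mem_Icc] at hy
    simp only [Set.mem_iUnion, cell, toR2, Set.mem_prod, Set.mem_Icc]
    by_cases hyp : z ≤ q + 1
    · exact ⟨(p, q), ha, by simpa using hy.1, ⟨by simp; linarith, by simpa using hyp⟩⟩
    · refine ⟨(p, q + 1), hb, by simpa using hy.1, ⟨by push_cast; linarith, by push_cast; linarith⟩⟩
  · rintro ⟨c, d⟩ hc
    rw [interior_cell, Set.eq_empty_iff_forall_notMem]
    rintro ⟨y, z⟩ ⟨hy, hy'⟩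
    simp only [cell, toR2, Set.mem_prod, Set.mem_Icc, Set.mem_Ioo] at hy hy'
    obtain ⟨⟨e1, e2⟩, e3, e4⟩ := hy
    obtain ⟨⟨f1, f2⟩, f3, f4⟩ := hy'
    have g1 : d < q + 2 := by exact_mod_cast (by push_cast; linarith : (d : ℝ) < ((q + 2 : ℤ) : ℝ))
    have g2 : q < d + 1 := by exact_mod_cast (by push_cast; linarith : (q : ℝ) < ((d + 1 : ℤ) : ℝ))
    have g3 : c < p + 1 := by exact_mod_cast (by push_cast; linarith : (c : ℝ) < ((p + 1 : ℤ) : ℝ))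
    have g4 : p < c + 1 := by exact_mod_cast (by push_cast; linarith : (p : ℝ) < ((c + 1 : ℤ) : ℝ))
    obtain rfl : c = p := by omega
    obtain rfl | rfl : d = q ∨ d = q + 1 := by omega
    · exact hc ha
    · exact hc hb

lemma toR2_mem_posSet {A : Set (ℤ × ℤ)} {a : ℤ × ℤ} (ha : a ∈ A) : toR2 a ∈ posSet A := by
  constructor
  · exact Set.subset_biUnion_of_mem (u := fun c => cell (toR2 c)) ha
  · rintro ⟨c, d⟩ hc
    obtain ⟨p, q⟩ := a
    rw [interior_cell, Set.eq_empty_iff_forall_notMem]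
    rintro ⟨y, z⟩ ⟨hy, hy'⟩
    simp only [cell, toR2, Set.mem_prod, Set.mem_Icc, Set.mem_Ioo] at hy hy'
    obtain ⟨⟨e1, e2⟩, e3, e4⟩ := hy
    obtain ⟨⟨f1, f2⟩, f3, f4⟩ := hy'
    have g1 : d < q + 1 := by exact_mod_cast (by push_cast; linarith : (d : ℝ) < ((q + 1 : ℤ) : ℝ))
    have g2 : q < d + 1 := by exact_mod_cast (by push_cast; linarith : (q : ℝ) < ((d + 1 : ℤ) : ℝ))
    have g3 : c < p + 1 := by exact_mod_cast (by push_cast; linarith : (c : ℝ) < ((p + 1 : ℤ) : ℝ))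
    have g4 : p < c + 1 := by exact_mod_cast (by push_cast; linarith : (p : ℝ) < ((c + 1 : ℤ) : ℝ))
    obtain rfl : c = p := by omega
    obtain rfl : d = q := by omega
    exact hc ha

lemma joined_h {A : Set (ℤ × ℤ)} {p q : ℤ} (ha : (p, q) ∈ A) (hb : (p + 1, q) ∈ A) :
    JoinedIn (posSet A) (toR2 (p, q)) (toR2 (p + 1, q)) := by
  refine JoinedIn.ofLine (f := fun θ : ℝ => ((p : ℝ) + θ, (q : ℝ))) (by fun_prop)
    (by simp [toR2]) (by simp [toR2]) ?_
  rintro _ ⟨θ, hθ, rfl⟩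
  exact mem_posSet_h ha hb hθ.1 hθ.2

lemma joined_v {A : Set (ℤ × ℤ)} {p q : ℤ} (ha : (p, q) ∈ A) (hb : (p, q + 1) ∈ A) :
    JoinedIn (posSet A) (toR2 (p, q)) (toR2 (p, q + 1)) := by
  refine JoinedIn.ofLine (f := fun θ : ℝ => ((p : ℝ), (q : ℝ) + θ)) (by fun_prop)
    (by simp [toR2]) (by simp [toR2]) ?_
  rintro _ ⟨θ, hθ, rfl⟩
  exact mem_posSet_v ha hb hθ.1 hθ.2

lemma joined_adj {A : Set (ℤ × ℤ)} {a b : ℤ × ℤ} (ha : a ∈ A) (hb : b ∈ A) (h : gridAdj a b) :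
    JoinedIn (posSet A) (toR2 a) (toR2 b) := by
  obtain ⟨p, q⟩ := a
  obtain ⟨r, w⟩ := b
  unfold gridAdj at h
  simp only at h
  have : (r = p + 1 ∧ w = q) ∨ (p = r + 1 ∧ w = q) ∨ (r = p ∧ w = q + 1) ∨
      (r = p ∧ q = w + 1) := by
    rcases abs_cases (p - r) with h1 | h1 <;> rcases abs_cases (q - w) with h2 | h2 <;> omega
  rcases this with ⟨rfl, rfl⟩ | ⟨rfl, rfl⟩ | ⟨rfl, rfl⟩ | ⟨rfl, rfl⟩
  · exact joined_h ha hb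
  · exact (joined_h hb ha).symm
  · exact joined_v ha hb
  · exact (joined_v hb ha).symm

lemma joined_of_reach {A : Set (ℤ × ℤ)} {a b : ℤ × ℤ} (ha : a ∈ A) (h : gridReach A a b) :
    JoinedIn (posSet A) (toR2 a) (toR2 b) := by
  induction h with
  | refl => exact JoinedIn.refl (toR2_mem_posSet ha)
  | tail _ h ih => exact ih.trans (joined_adj h.1 h.2.1 h.2.2)

/-- Unlabeled unit squares inside the domain `D = ⋃_{c ∈ C} cell c`, with the grid graph on
`C` connected, can always be monotonically reconfigured from `S` to `T`: there are
enumerations `s` of `S` and `t` of `T` and continuous collision-free paths `γ i` from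
`s i` to `t i` staying inside `D`, where path `i` avoids the still-occupied cells
`cell (s j)` for `j > i` and the already-filled target cells `cell (t j)` for `j < i`. -/
theorem unlabeled_unit_squares_monotone_reconfiguration_bounded
    (C : Finset (ℤ × ℤ))
    (hconn : ∀ p ∈ C, ∀ q ∈ C, gridReach (↑C) p q)
    (D : Set (ℝ × ℝ)) (hD : D = ⋃ c ∈ C, cell (toR2 c))
    (S T : Finset (ℤ × ℤ)) (hSC : S ⊆ C) (hTC : T ⊆ C)
    (n : ℕ) (hS : S.card = n) (hT : T.card = n) :
    ∃ (s t : Fin n → ℤ × ℤ),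
      Function.Injective s ∧ Function.Injective t ∧
      (∀ v : ℤ × ℤ, v ∈ S ↔ ∃ i : Fin n, s i = v) ∧
      (∀ v : ℤ × ℤ, v ∈ T ↔ ∃ i : Fin n, t i = v) ∧
      ∃ γ : Fin n → ℝ → ℝ × ℝ,
        ∀ i : Fin n, ContinuousOn (γ i) (Set.Icc 0 1) ∧
          γ i 0 = toR2 (s i) ∧ γ i 1 = toR2 (t i) ∧
          ∀ u ∈ Set.Icc (0 : ℝ) 1,
            cell (γ i u) ⊆ D ∧
            (∀ j : Fin n, i < j → interior (cell (γ i u)) ∩ cell (toR2 (s j)) = ∅) ∧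
            (∀ j : Fin n, j < i → interior (cell (γ i u)) ∩ cell (toR2 (t j)) = ∅) := by
  obtain ⟨s, t, hs, ht, hSs, hTt, hm⟩ := exists_plan _ C S T n rfl hconn hSC hTC hS hT
  refine ⟨s, t, hs, ht, hSs, hTt, ?_⟩
  have hJ : ∀ i, JoinedIn (posSet (freeSet C s t i)) (toR2 (s i)) (toR2 (t i)) :=
    fun i => joined_of_reach (hm i).1 (hm i).2.2
  refine ⟨fun i => (hJ i).somePath.extend, fun i => ⟨?_, ?_, ?_, ?_⟩⟩
  · exact (hJ i).somePath.continuous_extend.continuousOn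
  · simp
  · simp
  · intro u hu
    have hmem : (hJ i).somePath.extend u ∈ posSet (freeSet C s t i) := by
      rw [Path.extend_apply _ hu]
      exact (hJ i).somePath_mem _
    refine ⟨?_, fun j hj => hmem.2 _ fun h => h.2.1 j hj rfl,
      fun j hj => hmem.2 _ fun h => h.2.2 j hj rfl⟩
    rw [hD]
    exact hmem.1.trans (Set.biUnion_subset_biUnion_left fun c hc => hc.1)
end

section
/- Let C ⊆ ℤ², let D = ⋃_{c ∈ C} cell(c), and let γ : [0, 1] → ℝ² be a continuous map with γ(0) = p ∈ ℤ² and γ(1) = q ∈ ℤ² such that cell(γ(u)) ⊆ D for every u ∈ [0, 1]. Then p and q lie in the same connected component of the grid graph on C; that is, there is a finite sequence p = p₀, p₁, …, p_m = q of points of C with consecutive points at L¹-distance exactly 1. -/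
/-- One step of the grid graph on `C`. -/
def gridStep (C : Set (ℤ × ℤ)) (a b : ℤ × ℤ) : Prop :=
  a ∈ C ∧ b ∈ C ∧ |b.1 - a.1| + |b.2 - a.2| = 1

theorem gridStep_symm (C : Set (ℤ × ℤ)) : Std.Symm (gridStep C) := by
  constructor
  rintro a b ⟨ha, hb, h⟩
  refine ⟨hb, ha, ?_⟩
  rw [abs_sub_comm a.1, abs_sub_comm a.2]
  exact h

theorem mem_of_near {C : Set (ℤ × ℤ)} {x : ℝ × ℝ}
    (hx : cell x ⊆ ⋃ c ∈ C, cell (toR2 c)) {c : ℤ × ℤ}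
    (h1 : |(c.1 : ℝ) - x.1| < 1) (h2 : |(c.2 : ℝ) - x.2| < 1) : c ∈ C := by
  rw [abs_lt] at h1 h2
  have hy : (((c.1 + x.1 + 1) / 2, (c.2 + x.2 + 1) / 2) : ℝ × ℝ) ∈ cell x := by
    simp only [cell, Set.mem_prod, Set.mem_Icc]
    refine ⟨⟨?_, ?_⟩, ?_, ?_⟩ <;> linarith
  have := hx hy
  simp only [Set.mem_iUnion, cell, toR2, Set.mem_prod, Set.mem_Icc] at this
  obtain ⟨d, hd, ⟨a1, a2⟩, b1, b2⟩ := this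
  have e1 : (d.1 : ℝ) < c.1 + 1 := by linarith
  have e2 : (c.1 : ℝ) < d.1 + 1 := by linarith
  have e3 : (d.2 : ℝ) < c.2 + 1 := by linarith
  have e4 : (c.2 : ℝ) < d.2 + 1 := by linarith
  have f1 : d.1 < c.1 + 1 := by exact_mod_cast e1
  have f2 : c.1 < d.1 + 1 := by exact_mod_cast e2
  have f3 : d.2 < c.2 + 1 := by exact_mod_cast e3
  have f4 : c.2 < d.2 + 1 := by exact_mod_cast e4
  have : c = d := Prod.ext (by omega) (by omega)
  rw [this]
  exact hd

theorem near_int {a b : ℤ} {x : ℝ} (ha : |(a : ℝ) - x| < 1) (hb : |(b : ℝ) - x| < 1) :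
    a = b ∨ |b - a| = 1 := by
  rw [abs_lt] at ha hb
  have e1 : (a : ℝ) < b + 2 := by linarith
  have e2 : (b : ℝ) < a + 2 := by linarith
  have f1 : a < b + 2 := by exact_mod_cast e1
  have f2 : b < a + 2 := by exact_mod_cast e2
  rw [abs_eq (by norm_num)]
  omega

theorem near_connected {C : Set (ℤ × ℤ)} {x : ℝ × ℝ}
    (hx : cell x ⊆ ⋃ c ∈ C, cell (toR2 c)) {a b : ℤ × ℤ}
    (a1 : |(a.1 : ℝ) - x.1| < 1) (a2 : |(a.2 : ℝ) - x.2| < 1)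
    (b1 : |(b.1 : ℝ) - x.1| < 1) (b2 : |(b.2 : ℝ) - x.2| < 1) :
    Relation.ReflTransGen (gridStep C) a b := by
  obtain ⟨a, a'⟩ := a
  obtain ⟨b, b'⟩ := b
  have ha : (a, a') ∈ C := mem_of_near hx a1 a2
  have hb : (b, b') ∈ C := mem_of_near hx b1 b2
  have hc : (b, a') ∈ C := mem_of_near hx b1 a2
  have s1 : Relation.ReflTransGen (gridStep C) (a, a') (b, a') := by
    rcases near_int a1 b1 with h | h
    · simp only at h
      rw [h]
    · exact .single ⟨ha, hc, by simpa using h⟩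
  have s2 : Relation.ReflTransGen (gridStep C) (b, a') (b, b') := by
    rcases near_int a2 b2 with h | h
    · simp only at h
      rw [h]
    · exact .single ⟨hc, hb, by simpa using h⟩
  exact s1.trans s2

theorem near_floor (x : ℝ) : |((⌊x⌋ : ℤ) : ℝ) - x| < 1 := by
  rw [abs_lt]
  constructor <;> linarith [Int.floor_le x, Int.lt_floor_add_one x]

theorem walk_of_reach {C : Set (ℤ × ℤ)} {p q : ℤ × ℤ} (hp : p ∈ C)
    (h : Relation.ReflTransGen (gridStep C) p q) :
    ∃ (m : ℕ) (w : Fin (m + 1) → ℤ × ℤ),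
      w 0 = p ∧ w (Fin.last m) = q ∧
      (∀ i : Fin (m + 1), w i ∈ C) ∧
      (∀ i : Fin m,
        |(w i.succ).1 - (w i.castSucc).1| + |(w i.succ).2 - (w i.castSucc).2| = 1) := by
  induction h with
  | refl => exact ⟨0, fun _ => p, rfl, rfl, fun _ => hp, fun i => i.elim0⟩
  | @tail b c _ hs ih =>
    obtain ⟨m, w, h0, hl, hC, hw⟩ := ih
    refine ⟨m + 1, Fin.snoc (α := fun _ => ℤ × ℤ) w c, ?_, ?_, ?_, ?_⟩
    · rw [← Fin.castSucc_zero, Fin.snoc_castSucc, h0]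
    · rw [Fin.snoc_last]
    · intro i
      refine Fin.lastCases ?_ (fun j => ?_) i
      · rw [Fin.snoc_last]
        exact hs.2.1
      · rw [Fin.snoc_castSucc]
        exact hC j
    · intro i
      refine Fin.lastCases ?_ (fun j => ?_) i
      · rw [Fin.succ_last, Fin.snoc_last, Fin.snoc_castSucc, hl]
        exact hs.2.2
      · rw [Fin.succ_castSucc, Fin.snoc_castSucc, Fin.snoc_castSucc]
        exact hw j

/-- Any continuous motion of a unit square that stays inside `D = ⋃_{c ∈ C} cell c` and
starts and ends at integer positions `p` and `q` connects grid positions in the same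
connected component of the grid graph on `C`: there is a walk `p = w 0, …, w m = q`
through points of `C` with consecutive points at L¹-distance exactly 1. -/
theorem motion_in_domain_gives_grid_walk
    (C : Set (ℤ × ℤ)) (D : Set (ℝ × ℝ)) (hD : D = ⋃ c ∈ C, cell (toR2 c))
    (p q : ℤ × ℤ) (γ : ℝ → ℝ × ℝ) (hγ : ContinuousOn γ (Set.Icc 0 1))
    (h0 : γ 0 = toR2 p) (h1 : γ 1 = toR2 q)
    (hin : ∀ u ∈ Set.Icc (0 : ℝ) 1, cell (γ u) ⊆ D) :
    ∃ (m : ℕ) (w : Fin (m + 1) → ℤ × ℤ),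
      w 0 = p ∧ w (Fin.last m) = q ∧
      (∀ i : Fin (m + 1), w i ∈ C) ∧
      (∀ i : Fin m,
        |(w i.succ).1 - (w i.castSucc).1| + |(w i.succ).2 - (w i.castSucc).2| = 1) := by
  subst hD
  have key : Relation.ReflTransGen (gridStep C) (⌊(γ 0).1⌋, ⌊(γ 0).2⌋) (⌊(γ 1).1⌋, ⌊(γ 1).2⌋) := by
    refine (isPreconnected_Icc (a := (0 : ℝ)) (b := 1)).induction₂
      (fun u v => Relation.ReflTransGen (gridStep C)
        (⌊(γ u).1⌋, ⌊(γ u).2⌋) (⌊(γ v).1⌋, ⌊(γ v).2⌋)) ?_ ?_ ?_ (by simp) (by simp)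
    · intro u hu
      have c1 : ContinuousWithinAt (fun v => |((⌊(γ u).1⌋ : ℤ) : ℝ) - (γ v).1|)
          (Set.Icc 0 1) u := (continuousWithinAt_const.sub (hγ u hu).fst).abs
      have c2 : ContinuousWithinAt (fun v => |((⌊(γ u).2⌋ : ℤ) : ℝ) - (γ v).2|)
          (Set.Icc 0 1) u := (continuousWithinAt_const.sub (hγ u hu).snd).abs
      filter_upwards [c1.eventually_lt_const (near_floor _),
        c2.eventually_lt_const (near_floor _), self_mem_nhdsWithin] with v h1 h2 hv
      exact near_connected (hin v hv) h1 h2 (near_floor _) (near_floor _)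
    · intro x y z _ _ _ h h'
      exact h.trans h'
    · intro x y _ _ h
      have := gridStep_symm C
      exact Std.Symm.symm _ _ h
  simp only [h0, h1, toR2, Int.floor_intCast] at key
  refine walk_of_reach ?_ key
  refine mem_of_near (hin 0 (by simp)) ?_ ?_ <;> simp [h0, toR2]
end

section
/- Let C ⊆ ℤ², O ⊆ C, and D = ⋃_{c ∈ C} cell(c). Let γ : [0, 1] → ℝ² be continuous with γ(0) = p ∈ ℤ² and γ(1) = q ∈ ℤ², such that for every u ∈ [0, 1]: cell(γ(u)) ⊆ D and the interior of cell(γ(u)) is disjoint from cell(r) for every r ∈ O. Then there exists a finite sequence p = p₀, p₁, …, p_m = q with consecutive points at L¹-distance exactly 1 and with pᵢ ∈ C \ O for every 0 ≤ i ≤ m. -/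
/-- Integer cells overlapping the square at `x`. -/
def Ov (x : ℝ × ℝ) (c : ℤ × ℤ) : Prop :=
  (x.1 < c.1 + 1 ∧ (c.1 : ℝ) < x.1 + 1) ∧ (x.2 < c.2 + 1 ∧ (c.2 : ℝ) < x.2 + 1)

/-- One step in the grid graph on `S`. -/
def GStep (S : Set (ℤ × ℤ)) (a b : ℤ × ℤ) : Prop :=
  a ∈ S ∧ b ∈ S ∧ |b.1 - a.1| + |b.2 - a.2| = 1

lemma GStep.symm {S : Set (ℤ × ℤ)} {a b : ℤ × ℤ} (h : GStep S a b) : GStep S b a := by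
  obtain ⟨ha, hb, h⟩ := h
  refine ⟨hb, ha, ?_⟩
  rw [abs_sub_comm a.1, abs_sub_comm a.2]; exact h

lemma reach_symm {S : Set (ℤ × ℤ)} {a b : ℤ × ℤ} (h : Relation.ReflTransGen (GStep S) a b) :
    Relation.ReflTransGen (GStep S) b a := by
  induction h with
  | refl => exact .refl
  | tail _ h ih => exact .head h.symm ih

lemma ov_floor (x : ℝ × ℝ) : Ov x (⌊x.1⌋, ⌊x.2⌋) := by
  have h1 := Int.floor_le x.1
  have h2 := Int.lt_floor_add_one x.1
  have h3 := Int.floor_le x.2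
  have h4 := Int.lt_floor_add_one x.2
  refine ⟨⟨?_, ?_⟩, ?_, ?_⟩ <;> simp only <;> linarith

lemma near_of {t : ℝ} {m n : ℤ} (h1 : t < m + 1) (h2 : (m : ℝ) < t + 1)
    (h3 : t < n + 1) (h4 : (n : ℝ) < t + 1) : n - m = 0 ∨ |n - m| = 1 := by
  have a : n < m + 2 := by
    have : (n : ℝ) < ((m + 2 : ℤ) : ℝ) := by push_cast; linarith
    exact_mod_cast this
  have b : m < n + 2 := by
    have : (m : ℝ) < ((n + 2 : ℤ) : ℝ) := by push_cast; linarith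
    exact_mod_cast this
  have : n - m = 0 ∨ n - m = 1 ∨ n - m = -1 := by omega
  rcases this with h | h | h <;> simp [h]

lemma ov_reach {S : Set (ℤ × ℤ)} {x : ℝ × ℝ} (hS : ∀ c, Ov x c → c ∈ S) {c d : ℤ × ℤ}
    (hc : Ov x c) (hd : Ov x d) : Relation.ReflTransGen (GStep S) c d := by
  have he : Ov x (d.1, c.2) := ⟨hd.1, hc.2⟩
  have r1 : Relation.ReflTransGen (GStep S) c (d.1, c.2) := by
    rcases near_of hc.1.1 hc.1.2 hd.1.1 hd.1.2 with h | h
    · have : c = (d.1, c.2) := Prod.ext (by simp only; omega) rfl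
      rw [← this]
    · exact .single ⟨hS _ hc, hS _ he, by simp [h]⟩
  have r2 : Relation.ReflTransGen (GStep S) (d.1, c.2) d := by
    rcases near_of hc.2.1 hc.2.2 hd.2.1 hd.2.2 with h | h
    · have : d = (d.1, c.2) := Prod.ext rfl (by simp only; omega)
      rw [← this]
    · exact .single ⟨hS _ he, hS _ hd, by simp [h]⟩
  exact r1.trans r2

lemma reach_walk {S : Set (ℤ × ℤ)} {a b : ℤ × ℤ} (ha : a ∈ S)
    (h : Relation.ReflTransGen (GStep S) a b) :
    ∃ (m : ℕ) (w : ℕ → ℤ × ℤ), w 0 = a ∧ w m = b ∧ (∀ i ≤ m, w i ∈ S) ∧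
      ∀ i < m, |(w (i+1)).1 - (w i).1| + |(w (i+1)).2 - (w i).2| = 1 := by
  induction h with
  | refl => exact ⟨0, fun _ => a, rfl, rfl, fun _ _ => ha, by simp⟩
  | @tail b c _ h ih =>
    obtain ⟨m, w, w0, wm, wS, ws⟩ := ih
    refine ⟨m + 1, fun i => if i ≤ m then w i else c, by simpa using w0, by simp, ?_, ?_⟩
    · intro i hi
      by_cases him : i ≤ m
      · simpa [him] using wS i him
      · simpa [him] using h.2.1
    · intro i hi
      by_cases him : i < m
      · have h1 : i ≤ m := by omega
        have h2 : i + 1 ≤ m := by omega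
        simpa only [h1, h2, if_true] using ws i him
      · have : i = m := by omega
        subst this
        simpa [wm] using h.2.2

lemma ov_int {p c : ℤ × ℤ} (h : Ov (toR2 p) c) : c = p := by
  obtain ⟨⟨h1, h2⟩, h3, h4⟩ := h
  simp only [toR2] at h1 h2 h3 h4
  norm_cast at h1 h2 h3 h4
  exact Prod.ext (by omega) (by omega)

lemma ov_self (p : ℤ × ℤ) : Ov (toR2 p) p := by
  simp [Ov, toR2]

lemma ov_good {C O : Set (ℤ × ℤ)} {x : ℝ × ℝ}
    (hin : cell x ⊆ ⋃ c ∈ C, cell (toR2 c))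
    (hav : ∀ r ∈ O, interior (cell x) ∩ cell (toR2 r) = ∅) {c : ℤ × ℤ} (hc : Ov x c) :
    c ∈ C \ O := by
  obtain ⟨⟨h1, h2⟩, h3, h4⟩ := hc
  have hz : (((c.1 + x.1 + 1) / 2, (c.2 + x.2 + 1) / 2) : ℝ × ℝ) ∈ interior (cell x) := by
    rw [cell, interior_prod_eq, interior_Icc, interior_Icc]
    refine ⟨⟨?_, ?_⟩, ?_, ?_⟩ <;> simp only <;> linarith
  constructor
  · have := hin (interior_subset hz)
    simp only [Set.mem_iUnion, exists_prop] at this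
    obtain ⟨d, hd, ⟨⟨a1, a2⟩, a3, a4⟩⟩ := this
    simp only [toR2] at a1 a2 a3 a4
    have b1 : d.1 < c.1 + 1 := by
      have : (d.1 : ℝ) < ((c.1 + 1 : ℤ) : ℝ) := by push_cast; linarith
      exact_mod_cast this
    have b2 : c.1 < d.1 + 1 := by
      have : (c.1 : ℝ) < ((d.1 + 1 : ℤ) : ℝ) := by push_cast; linarith
      exact_mod_cast this
    have b3 : d.2 < c.2 + 1 := by
      have : (d.2 : ℝ) < ((c.2 + 1 : ℤ) : ℝ) := by push_cast; linarith
      exact_mod_cast this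
    have b4 : c.2 < d.2 + 1 := by
      have : (c.2 : ℝ) < ((d.2 + 1 : ℤ) : ℝ) := by push_cast; linarith
      exact_mod_cast this
    have : c = d := Prod.ext (by omega) (by omega)
    rwa [this]
  · intro hO
    have := hav c hO
    refine (Set.eq_empty_iff_forall_notMem.mp this) _ ⟨hz, ?_⟩
    refine ⟨⟨?_, ?_⟩, ?_, ?_⟩ <;> simp only [toR2] <;> linarith

lemma ov_open (c : ℤ × ℤ) : IsOpen {x | Ov x c} := by
  unfold Ov
  refine ((isOpen_lt ?_ ?_).and (isOpen_lt ?_ ?_)).and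
    ((isOpen_lt ?_ ?_).and (isOpen_lt ?_ ?_)) <;> fun_prop

/-- Any continuous collision-free motion of a unit square inside `D = ⋃_{c ∈ C} cell c`
whose interior avoids all occupied cells `cell r`, `r ∈ O`, and which starts and ends at
integer positions `p` and `q`, discretizes to a walk `p = w 0, …, w m = q` in the grid
graph with all vertices in `C \ O`. -/
theorem motion_avoiding_occupied_gives_grid_walk
    (C O : Set (ℤ × ℤ)) (hOC : O ⊆ C)
    (D : Set (ℝ × ℝ)) (hD : D = ⋃ c ∈ C, cell (toR2 c))
    (p q : ℤ × ℤ) (γ : ℝ → ℝ × ℝ) (hγ : ContinuousOn γ (Set.Icc 0 1))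
    (h0 : γ 0 = toR2 p) (h1 : γ 1 = toR2 q)
    (hin : ∀ u ∈ Set.Icc (0 : ℝ) 1, cell (γ u) ⊆ D)
    (havoid : ∀ u ∈ Set.Icc (0 : ℝ) 1, ∀ r ∈ O, interior (cell (γ u)) ∩ cell (toR2 r) = ∅) :
    ∃ (m : ℕ) (w : Fin (m + 1) → ℤ × ℤ),
      w 0 = p ∧ w (Fin.last m) = q ∧
      (∀ i : Fin (m + 1), w i ∈ C ∧ w i ∉ O) ∧
      (∀ i : Fin m,
        |(w i.succ).1 - (w i.castSucc).1| + |(w i.succ).2 - (w i.castSucc).2| = 1) := by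
  subst hD
  have good : ∀ u ∈ Set.Icc (0 : ℝ) 1, ∀ c, Ov (γ u) c → c ∈ C \ O :=
    fun u hu c hc => ov_good (hin u hu) (havoid u hu) hc
  have m0 : (0 : ℝ) ∈ Set.Icc (0 : ℝ) 1 := by simp
  have m1 : (1 : ℝ) ∈ Set.Icc (0 : ℝ) 1 := by simp
  have key := (isPreconnected_Icc (a := (0 : ℝ)) (b := 1)).induction₂
    (fun u v => ∀ c d, Ov (γ u) c → Ov (γ v) d → Relation.ReflTransGen (GStep (C \ O)) c d)
    (by
      intro u hu
      have ev := (hγ u hu).eventually ((ov_open _).mem_nhds (ov_floor (γ u)))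
      filter_upwards [ev, self_mem_nhdsWithin] with v hv hvI c d hc hd
      exact (ov_reach (good u hu) hc (ov_floor _)).trans (ov_reach (good v hvI) hv hd))
    (by
      intro u v z hu hv hz h h' c d hc hd
      exact (h c _ hc (ov_floor _)).trans (h' _ d (ov_floor _) hd))
    (by
      intro u v hu hv h c d hc hd
      exact reach_symm (h d c hd hc))
    m0 m1
  have hp : Ov (γ 0) p := h0 ▸ ov_self p
  have hq : Ov (γ 1) q := h1 ▸ ov_self q
  obtain ⟨m, w, w0, wm, wS, ws⟩ := reach_walk (good 0 m0 p hp) (key p q hp hq)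
  refine ⟨m, fun i => w i, by simpa using w0, by simpa using wm, fun i => wS i (by omega), ?_⟩
  intro i
  simpa using ws i i.2
end

section
/- Let C ⊆ ℤ² be finite, D = ⋃_{c ∈ C} cell(c), and S, T ⊆ C with |S| = |T| = n. If there exists any valid movement schedule (a finite sequence of moves, each move continuously translating a single unit square inside D while its interior stays disjoint from all other squares' cells) transforming the configuration with squares at the points of S into a configuration whose set of positions is exactly T, then there exists such a valid movement schedule in which each square moves at most once. -/
/-- A single valid move of square `i` inside the domain `D`: square `i` translates along a
continuous path `γ`, all other squares stay put, and at every time the moving square's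
cell stays inside `D` and its interior is disjoint from every other square's cell. -/
def MoveOf (n : ℕ) (D : Set (ℝ × ℝ)) (i : Fin n) (c c' : Fin n → ℝ × ℝ) : Prop :=
  (∀ j : Fin n, j ≠ i → c' j = c j) ∧
    ∃ γ : ℝ → ℝ × ℝ, ContinuousOn γ (Set.Icc 0 1) ∧ γ 0 = c i ∧ γ 1 = c' i ∧
      ∀ u ∈ Set.Icc (0 : ℝ) 1, cell (γ u) ⊆ D ∧
        ∀ j : Fin n, j ≠ i → interior (cell (γ u)) ∩ cell (c j) = ∅

/-- A single valid move (of some square) inside the domain `D`. -/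
def Move (n : ℕ) (D : Set (ℝ × ℝ)) (c c' : Fin n → ℝ × ℝ) : Prop :=
  ∃ i : Fin n, MoveOf n D i c c'

namespace USq

set_option linter.unusedSectionVars false

theorem rtg_mono {α : Type} {r p : α → α → Prop} {a b : α} (h : ∀ a b, r a b → p a b)
    (hab : Relation.ReflTransGen r a b) : Relation.ReflTransGen p a b := by
  induction hab with
  | refl => exact .refl
  | tail _ h1 ih => exact .tail ih (h _ _ h1)

section graph
variable {V : Type} [DecidableEq V] (adj : V → V → Prop)

/-- Connectivity inside the finite vertex set `C`. -/
def Conn (C : Finset V) : V → V → Prop :=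
  Relation.ReflTransGen (fun a b => adj a b ∧ a ∈ C ∧ b ∈ C)

variable {adj}

theorem Conn.mono {C C' : Finset V} (h : C ⊆ C') {a b : V} (hab : Conn adj C a b) :
    Conn adj C' a b :=
  rtg_mono (fun _ _ ⟨h1, h2, h3⟩ => ⟨h1, h h2, h h3⟩) hab

theorem Conn.symm (hs : ∀ a b, adj a b → adj b a) {C : Finset V} {a b : V}
    (hab : Conn adj C a b) : Conn adj C b a := by
  induction hab with
  | refl => exact .refl
  | tail _ h ih => exact .head ⟨hs _ _ h.1, h.2.2, h.2.1⟩ ih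

theorem Conn.trans {C : Finset V} {a b c : V}
    (hab : Conn adj C a b) (hbc : Conn adj C b c) : Conn adj C a c :=
  Relation.ReflTransGen.trans hab hbc

theorem crossing {C B : Finset V} {r w : V} (h : Conn adj C r w) (hr : r ∈ B) (hw : w ∉ B) :
    ∃ a b, a ∈ B ∧ b ∉ B ∧ adj a b ∧ b ∈ C ∧ Conn adj C r b := by
  induction h with
  | refl => exact absurd hr hw
  | @tail b c hb hc ih =>
    by_cases hbB : b ∈ B
    · exact ⟨b, c, hbB, hw, hc.1, hc.2.2, .tail hb hc⟩
    · exact ih hbB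

theorem noncut (hs : ∀ a b, adj a b → adj b a) (C : Finset V) (hC : C.Nonempty) :
    ∃ v ∈ C, ∀ a ∈ C.erase v, ∀ b ∈ C.erase v, Conn adj C a b → Conn adj (C.erase v) a b := by
  classical
  obtain ⟨r, hr⟩ := hC
  set K := C.filter (fun x => Conn adj C r x) with hK
  have hKC : K ⊆ C := Finset.filter_subset _ _
  have hrK : r ∈ K := by simp [hK, hr]; exact .refl
  have key : ∃ v ∈ K, ∀ w ∈ K, w ≠ v → Conn adj (K.erase v) r w := by
    by_cases hKr : K = {r}
    · refine ⟨r, hrK, fun w hw hne => ?_⟩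
      rw [hKr] at hw
      simp at hw; exact absurd hw hne
    · set F := K.powerset.filter (fun B => r ∈ B ∧ B ≠ K ∧ ∀ b ∈ B, Conn adj B r b) with hF
      have hFne : F.Nonempty := by
        refine ⟨{r}, ?_⟩
        simp only [hF, Finset.mem_filter, Finset.mem_powerset, Finset.singleton_subset_iff,
          Finset.mem_singleton]
        exact ⟨hrK, trivial, fun h => hKr h.symm, fun b hb => hb ▸ .refl⟩
      obtain ⟨B, hB, hmax⟩ := Finset.exists_max_image F Finset.card hFne
      simp only [hF, Finset.mem_filter, Finset.mem_powerset] at hB hmax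
      obtain ⟨hBK, hrB, hne, hconn⟩ := hB
      obtain ⟨w, hwK, hwB⟩ : ∃ w ∈ K, w ∉ B := by
        by_contra hcon
        push Not at hcon
        exact hne (Finset.Subset.antisymm hBK hcon)
      have hw : Conn adj C r w := (Finset.mem_filter.1 hwK).2
      obtain ⟨a, b, ha, hb, hab, hbC, hrb⟩ := crossing hw hrB hwB
      have hbK : b ∈ K := Finset.mem_filter.2 ⟨hbC, hrb⟩
      have hins : insert b B = K := by
        by_contra hcon
        have := hmax (insert b B) ⟨?_, ?_, hcon, ?_⟩
        · rw [Finset.card_insert_of_notMem hb] at this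
          omega
        · exact Finset.insert_subset hbK hBK
        · exact Finset.mem_insert_of_mem hrB
        · intro x hx
          rcases Finset.mem_insert.1 hx with rfl | hx
          · exact .tail ((hconn a ha).mono (Finset.subset_insert _ _))
              ⟨hab, Finset.mem_insert_of_mem ha, Finset.mem_insert_self _ _⟩
          · exact (hconn x hx).mono (Finset.subset_insert _ _)
      refine ⟨b, hbK, fun x hx hxb => ?_⟩
      rw [← hins] at hx ⊢
      rw [Finset.erase_insert hb]
      exact hconn x ((Finset.mem_insert.1 hx).resolve_left hxb)
  obtain ⟨v, hv, hvk⟩ := key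
  refine ⟨v, hKC hv, fun a ha b hb hab => ?_⟩
  by_cases haK : a ∈ K
  · have hbK : b ∈ K := Finset.mem_filter.2
      ⟨Finset.mem_of_mem_erase hb, (Finset.mem_filter.1 haK).2.trans hab⟩
    have h1 := hvk a haK (Finset.ne_of_mem_erase ha)
    have h2 := hvk b hbK (Finset.ne_of_mem_erase hb)
    exact ((h1.symm hs).trans h2).mono (Finset.erase_subset_erase _ hKC)
  · have hout : ∀ u, Conn adj C a u → u ≠ v := by
      rintro u hu rfl
      exact haK (Finset.mem_filter.2 ⟨Finset.mem_of_mem_erase ha,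
        (Finset.mem_filter.1 hv).2.trans (hu.symm hs)⟩)
    clear hb
    induction hab with
    | refl => exact .refl
    | @tail x y hx hxy ih =>
      exact .tail ih ⟨hxy.1, Finset.mem_erase.2 ⟨hout _ hx, hxy.2.1⟩,
        Finset.mem_erase.2 ⟨hout _ (.tail hx hxy), hxy.2.2⟩⟩

variable (adj) in
/-- Paths in `C` avoiding `O`. -/
def Free (C O : Finset V) : V → V → Prop :=
  Relation.ReflTransGen (fun a b => adj a b ∧ (a ∈ C ∧ a ∉ O) ∧ (b ∈ C ∧ b ∉ O))

theorem Free.symm (hs : ∀ a b, adj a b → adj b a) {C O : Finset V} {a b : V}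
    (hab : Free adj C O a b) : Free adj C O b a := by
  induction hab with
  | refl => exact .refl
  | tail _ h ih => exact .head ⟨hs _ _ h.1, h.2.2, h.2.1⟩ ih

theorem Free.conn {C O : Finset V} {a b : V}
    (hab : Free adj C O a b) : Conn adj C a b :=
  rtg_mono (fun _ _ h => ⟨h.1, h.2.1.1, h.2.2.1⟩) hab

theorem nearest {C S : Finset V} {s₀ w : V} (h : Conn adj C s₀ w) (hs₀ : s₀ ∈ S) :
    ∃ s ∈ S, w ∉ S.erase s ∧ Free adj C (S.erase s) s w := by
  induction h with
  | refl => exact ⟨s₀, hs₀, by simp, .refl⟩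
  | @tail x y hx hxy ih =>
    by_cases hy : y ∈ S
    · exact ⟨y, hy, by simp, .refl⟩
    · obtain ⟨s, hs, hxs, hf⟩ := ih
      have hys : y ∉ S.erase s := fun h => hy (Finset.mem_of_mem_erase h)
      exact ⟨s, hs, hys, .tail hf ⟨hxy.1, ⟨hxy.2.1, hxs⟩, ⟨hxy.2.2, hys⟩⟩⟩

end graph

/-- Sequences of moves, each label of the index set moving exactly once. -/
inductive Sched {ι X : Type} [DecidableEq ι] (M : ι → X → X → Prop) :
    Finset ι → X → X → Prop
  | nil (c : X) : Sched M ∅ c c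
  | cons (i : ι) (I : Finset ι) (c c1 c2 : X) (hi : i ∉ I) (hm : M i c c1)
      (h : Sched M I c1 c2) : Sched M (insert i I) c c2

theorem Sched.snoc {ι X : Type} [DecidableEq ι] {M : ι → X → X → Prop} {I : Finset ι}
    {c c1 c2 : X} {i : ι} (h : Sched M I c c1) (hi : i ∉ I) (hm : M i c1 c2) :
    Sched M (insert i I) c c2 := by
  induction h with
  | nil c => exact .cons i ∅ _ _ _ hi hm (.nil _)
  | cons j J c d1 d2 hj hmj h ih =>
    rw [Finset.insert_comm]
    simp only [Finset.mem_insert, not_or] at hi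
    refine .cons j _ _ _ _ ?_ hmj (ih hi.2 hm)
    simp only [Finset.mem_insert, not_or]
    exact ⟨fun h => hi.1 h.symm, hj⟩

theorem Sched.map {ι X Y : Type} [DecidableEq ι] {M : ι → X → X → Prop}
    {M' : ι → Y → Y → Prop} (f : X → Y) (hf : ∀ i c c', M i c c' → M' i (f c) (f c'))
    {I : Finset ι} {c c' : X} (h : Sched M I c c') : Sched M' I (f c) (f c') := by
  induction h with
  | nil c => exact .nil _
  | cons j J c d1 d2 hj hmj h ih => exact .cons j J _ _ _ hj (hf _ _ _ hmj) ih

theorem Sched.toFin {ι X : Type} [DecidableEq ι] {M : ι → X → X → Prop} {I : Finset ι}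
    {c c' : X} (h : Sched M I c c') :
    ∃ (N : ℕ) (cs : Fin (N + 1) → X) (idx : Fin N → ι), Function.Injective idx ∧
      (∀ k, idx k ∈ I) ∧ cs 0 = c ∧ cs (Fin.last N) = c' ∧
      ∀ k : Fin N, M (idx k) (cs k.castSucc) (cs k.succ) := by
  induction h with
  | nil c => exact ⟨0, fun _ => c, Fin.elim0, fun a => a.elim0, fun a => a.elim0, rfl, rfl,
      fun a => a.elim0⟩
  | cons j J c d1 d2 hj hmj h ih =>
    obtain ⟨N, cs, idx, hinj, hmem, h0, hl, hM⟩ := ih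
    refine ⟨N + 1, Fin.cons c cs, Fin.cons j idx, ?_, ?_, rfl, ?_, ?_⟩
    · rw [Fin.cons_injective_iff]
      refine ⟨?_, hinj⟩
      rintro ⟨k, rfl⟩
      exact hj (hmem k)
    · intro k
      refine Fin.cases ?_ (fun k => ?_) k
      · simp
      · simp [hmem k]
    · rw [← Fin.succ_last, Fin.cons_succ, hl]
    · intro k
      refine Fin.cases ?_ (fun k => ?_) k
      · simpa [h0] using hmj
      · simpa [← Fin.succ_castSucc] using hM k

section comb
variable {V ι : Type} [DecidableEq V] [DecidableEq ι] (adj : V → V → Prop)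

/-- A chip move along a free path. -/
def GMove (C : Finset V) (i : ι) (c c' : ι → V) : Prop :=
  (∀ j, j ≠ i → c' j = c j) ∧ c i ∈ C ∧ (∀ j, j ≠ i → c j ≠ c i) ∧
  Relation.ReflTransGen (fun a b => adj a b ∧ (a ∈ C ∧ ∀ j, j ≠ i → c j ≠ a) ∧
    (b ∈ C ∧ ∀ j, j ≠ i → c j ≠ b)) (c i) (c' i)

variable {adj}

theorem GMove.mono {C C' : Finset V} (h : C ⊆ C') {i : ι} {c c' : ι → V}
    (hm : GMove adj C i c c') : GMove adj C' i c c' :=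
  ⟨hm.1, h hm.2.1, hm.2.2.1, rtg_mono
    (fun _ _ ⟨h1, h2, h3⟩ => ⟨h1, ⟨h h2.1, h2.2⟩, ⟨h h3.1, h3.2⟩⟩) hm.2.2.2⟩

open Classical in
theorem comb (hs : ∀ a b, adj a b → adj b a) : ∀ (m : ℕ) (C : Finset V), C.card = m →
    ∀ (I : Finset ι) (c : ι → V) (T : Finset V), Function.Injective c →
    (∀ i ∈ I, c i ∈ C) → (∀ i, i ∉ I → c i ∉ C) → T ⊆ C →
    (∀ x ∈ C, ((I.image c).filter (fun s => Conn adj C s x)).card =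
      (T.filter (fun s => Conn adj C s x)).card) →
    ∃ (c' : ι → V) (J : Finset ι), J ⊆ I ∧ Sched (GMove adj C) J c c' ∧
      (∀ i, i ∉ I → c' i = c i) ∧ Function.Injective c' ∧ I.image c' = T := by
  intro m
  induction m with
  | zero =>
    intro C hC I c T hinj hI hI' hT _
    have hC0 : C = ∅ := Finset.card_eq_zero.1 hC
    subst hC0
    have hI0 : I = ∅ := Finset.eq_empty_of_forall_notMem (fun i hi => by simpa using hI i hi)
    have hT0 : T = ∅ := Finset.subset_empty.1 hT
    subst hI0 hT0
    exact ⟨c, ∅, le_rfl, .nil _, fun _ _ => rfl, hinj, by simp⟩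
  | succ m ih =>
    intro C hC I c T hinj hI hI' hT hbal
    obtain ⟨v, hv, hcut⟩ := noncut hs C (Finset.card_pos.1 (by omega))
    have hC' : (C.erase v).card = m := by rw [Finset.card_erase_of_mem hv]; omega
    have hsub : C.erase v ⊆ C := Finset.erase_subset _ _
    have hmono : ∀ {J : Finset ι} {c c' : ι → V}, Sched (GMove adj (C.erase v)) J c c' →
        Sched (GMove adj C) J c c' := fun h => h.map id (fun _ _ _ h => h.mono hsub)
    -- connectivity agrees
    have hcongr : ∀ (A : Finset V), A ⊆ C.erase v → ∀ x ∈ C.erase v,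
        A.filter (fun s => Conn adj (C.erase v) s x) = A.filter (fun s => Conn adj C s x) := by
      intro A hA x hx
      apply Finset.filter_congr
      intro s hsA
      exact ⟨fun h => h.mono hsub, fun h => hcut s (hA hsA) x hx h⟩
    -- balance after erasing connected vertices
    have hbal' : ∀ s ∈ I.image c, ∀ t ∈ T, Conn adj C s t → ∀ x ∈ C,
        (((I.image c).erase s).filter (fun s => Conn adj C s x)).card =
        ((T.erase t).filter (fun s => Conn adj C s x)).card := by
      intro s hsS t htT hst x hx
      have hb := hbal x hx
      rw [Finset.filter_erase, Finset.filter_erase]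
      by_cases hsx : Conn adj C s x
      · have htx : Conn adj C t x := (hst.symm hs).trans hsx
        rw [Finset.card_erase_of_mem (Finset.mem_filter.2 ⟨hsS, hsx⟩),
          Finset.card_erase_of_mem (Finset.mem_filter.2 ⟨htT, htx⟩), hb]
      · have htx : ¬ Conn adj C t x := fun h => hsx (hst.trans h)
        have e1 : s ∉ (I.image c).filter (fun s => Conn adj C s x) :=
          fun h => hsx (Finset.mem_filter.1 h).2
        have e2 : t ∉ T.filter (fun s => Conn adj C s x) :=
          fun h => htx (Finset.mem_filter.1 h).2
        rw [Finset.erase_eq_of_notMem e1, Finset.erase_eq_of_notMem e2, hb]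
    have himgerase : ∀ i ∈ I, (I.erase i).image c = (I.image c).erase (c i) := fun i _ =>
      Finset.image_erase hinj I i
    have hSC : I.image c ⊆ C := by
      intro x hx
      obtain ⟨i, hi, rfl⟩ := Finset.mem_image.1 hx
      exact hI i hi
    by_cases hvS : v ∈ I.image c
    · obtain ⟨i, hi, hiv⟩ := Finset.mem_image.1 hvS
      have hI1 : ∀ j ∈ I.erase i, c j ∈ C.erase v := fun j hj => Finset.mem_erase.2
        ⟨fun h => Finset.ne_of_mem_erase hj (hinj (h.trans hiv.symm)),
          hI j (Finset.mem_of_mem_erase hj)⟩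
      have hI2 : ∀ j, j ∉ I.erase i → c j ∉ C.erase v := by
        intro j hj hjC
        by_cases hji : j = i
        · subst hji; simp [hiv] at hjC
        · exact hI' j (fun h => hj (Finset.mem_erase.2 ⟨hji, h⟩)) (hsub hjC)
      have hSe : (I.image c).erase v ⊆ C.erase v := Finset.erase_subset_erase _ hSC
      by_cases hvT : v ∈ T
      · -- the chip at `v` stays
        have hTe : T.erase v ⊆ C.erase v := Finset.erase_subset_erase _ hT
        obtain ⟨c', J, hJ, hsch, hfix, hinj', himg⟩ := ih (C.erase v) hC' (I.erase i) c
          (T.erase v) hinj hI1 hI2 hTe (by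
            intro x hx
            rw [himgerase i hi, hiv, hcongr _ hSe x hx, hcongr _ hTe x hx]
            exact hbal' v hvS v hvT .refl x (hsub hx))
        refine ⟨c', J, hJ.trans (Finset.erase_subset _ _), hmono hsch, ?_, hinj', ?_⟩
        · exact fun j hj => hfix j (fun h => hj (Finset.mem_of_mem_erase h))
        · rw [← Finset.insert_erase hi, Finset.image_insert, himg, hfix i (by simp), hiv,
            Finset.insert_erase hvT]
      · -- the chip at `v` leaves last
        have hex : ∃ t₀ ∈ T, Conn adj C t₀ v := by
          have hb := hbal v hv
          have hpos : 0 < ((I.image c).filter (fun s => Conn adj C s v)).card :=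
            Finset.card_pos.2 ⟨v, Finset.mem_filter.2 ⟨hvS, .refl⟩⟩
          rw [hb] at hpos
          obtain ⟨t, ht⟩ := Finset.card_pos.1 hpos
          exact ⟨t, (Finset.mem_filter.1 ht).1, (Finset.mem_filter.1 ht).2⟩
        obtain ⟨t₀, ht₀, ht₀v⟩ := hex
        obtain ⟨t, ht, hvt, hfree⟩ := nearest ht₀v ht₀
        have hTe : T.erase t ⊆ C.erase v := fun x hx => Finset.mem_erase.2
          ⟨fun h => hvT (h ▸ Finset.mem_of_mem_erase hx), hT (Finset.mem_of_mem_erase hx)⟩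
        obtain ⟨c', J, hJ, hsch, hfix, hinj', himg⟩ := ih (C.erase v) hC' (I.erase i) c
          (T.erase t) hinj hI1 hI2 hTe (by
            intro x hx
            rw [himgerase i hi, hiv, hcongr _ hSe x hx, hcongr _ hTe x hx]
            exact hbal' v hvS t ht (hfree.conn.symm hs) x (hsub hx))
        have hc'i : c' i = v := (hfix i (by simp)).trans hiv
        have hoth : ∀ j, j ≠ i → ∀ a ∈ C, a ∉ T.erase t → c' j ≠ a := by
          rintro j hj a ha haT rfl
          by_cases hjI : j ∈ I
          · exact haT (himg ▸ Finset.mem_image_of_mem _ (Finset.mem_erase.2 ⟨hj, hjI⟩))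
          · rw [hfix j (fun h => hjI (Finset.mem_of_mem_erase h))] at ha
            exact hI' j hjI ha
        have hmove : GMove adj C i c' (Function.update c' i t) := by
          refine ⟨fun j hj => Function.update_of_ne hj _ _, hc'i ▸ hv,
            fun j hj h => hj (hinj' h), ?_⟩
          rw [Function.update_self, hc'i]
          refine rtg_mono ?_ (hfree.symm hs)
          rintro a b ⟨h1, h2, h3⟩
          exact ⟨h1, ⟨h2.1, fun j hj => hoth j hj a h2.1 h2.2⟩,
            ⟨h3.1, fun j hj => hoth j hj b h3.1 h3.2⟩⟩
        have htoth : ∀ j, j ≠ i → c' j ≠ t := fun j hj => hoth j hj t (hT ht) (by simp)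
        refine ⟨Function.update c' i t, insert i J, ?_, (hmono hsch).snoc ?_ hmove, ?_, ?_, ?_⟩
        · exact Finset.insert_subset hi (hJ.trans (Finset.erase_subset _ _))
        · exact fun h => by simpa using hJ h
        · intro j hj
          have hji : j ≠ i := fun h => hj (h ▸ hi)
          rw [Function.update_of_ne hji]
          exact hfix j (fun h => hj (Finset.mem_of_mem_erase h))
        · intro a b hab
          by_cases ha : a = i <;> by_cases hb : b = i
          · rw [ha, hb]
          · subst ha
            rw [Function.update_self, Function.update_of_ne hb] at hab
            exact absurd hab.symm (htoth b hb)
          · subst hb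
            rw [Function.update_self, Function.update_of_ne ha] at hab
            exact absurd hab (htoth a ha)
          · rw [Function.update_of_ne ha, Function.update_of_ne hb] at hab
            exact hinj' hab
        · rw [← Finset.insert_erase hi, Finset.image_insert, Function.update_self]
          rw [Finset.image_congr (g := c') (fun j hj => Function.update_of_ne
            (Finset.ne_of_mem_erase hj) _ _), himg, Finset.insert_erase ht]
    · by_cases hvT : v ∈ T
      · -- a nearest chip first moves to `v`
        have hex : ∃ s₀ ∈ I.image c, Conn adj C s₀ v := by
          have hb := hbal v hv
          have hpos : 0 < (T.filter (fun s => Conn adj C s v)).card :=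
            Finset.card_pos.2 ⟨v, Finset.mem_filter.2 ⟨hvT, .refl⟩⟩
          rw [← hb] at hpos
          obtain ⟨t, ht⟩ := Finset.card_pos.1 hpos
          exact ⟨t, (Finset.mem_filter.1 ht).1, (Finset.mem_filter.1 ht).2⟩
        obtain ⟨s₀, hs₀, hs₀v⟩ := hex
        obtain ⟨s, hsS, hvs, hfree⟩ := nearest hs₀v hs₀
        obtain ⟨i, hi, his⟩ := Finset.mem_image.1 hsS
        have hnev : ∀ j, c j ≠ v := by
          rintro j rfl
          by_cases hj : j ∈ I
          · exact hvS (Finset.mem_image_of_mem _ hj)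
          · exact hI' j hj hv
        have hoth : ∀ j, j ≠ i → ∀ a ∈ C, a ∉ (I.image c).erase s → c j ≠ a := by
          rintro j hj a ha haT rfl
          by_cases hjI : j ∈ I
          · refine haT (Finset.mem_erase.2 ⟨fun h => hj (hinj (h.trans his.symm)),
              Finset.mem_image_of_mem _ hjI⟩)
          · exact hI' j hjI ha
        set c1 := Function.update c i v with hc1
        have hc1i : c1 i = v := Function.update_self _ _ _
        have hc1j : ∀ j, j ≠ i → c1 j = c j := fun j hj => Function.update_of_ne hj _ _
        have hmove : GMove adj C i c c1 := by
          refine ⟨hc1j, hI i hi, fun j hj h => hj (hinj h), ?_⟩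
          rw [hc1i, his]
          refine rtg_mono ?_ hfree
          rintro a b ⟨h1, h2, h3⟩
          exact ⟨h1, ⟨h2.1, fun j hj => hoth j hj a h2.1 h2.2⟩,
            ⟨h3.1, fun j hj => hoth j hj b h3.1 h3.2⟩⟩
        have hinj1 : Function.Injective c1 := by
          intro a b hab
          by_cases ha : a = i <;> by_cases hb : b = i
          · rw [ha, hb]
          · rw [ha, hc1i, hc1j b hb] at hab
            exact absurd hab.symm (hnev b)
          · rw [hb, hc1i, hc1j a ha] at hab
            exact absurd hab (hnev a)
          · rw [hc1j a ha, hc1j b hb] at hab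
            exact hinj hab
        have himg1 : (I.erase i).image c1 = (I.image c).erase s := by
          rw [← his, ← himgerase i hi]
          exact Finset.image_congr (fun j hj => hc1j j (Finset.ne_of_mem_erase hj))
        have hSe : (I.image c).erase s ⊆ C.erase v := fun x hx => Finset.mem_erase.2
          ⟨fun h => hvS (h ▸ Finset.mem_of_mem_erase hx), hSC (Finset.mem_of_mem_erase hx)⟩
        have hTe : T.erase v ⊆ C.erase v := Finset.erase_subset_erase _ hT
        obtain ⟨c', J, hJ, hsch, hfix, hinj', himg⟩ := ih (C.erase v) hC' (I.erase i) c1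
          (T.erase v) hinj1
          (fun j hj => hSe (himg1 ▸ Finset.mem_image_of_mem _ hj))
          (by
            intro j hj hjC
            by_cases hji : j = i
            · rw [hji, hc1i] at hjC; simp at hjC
            · rw [hc1j j hji] at hjC
              exact hI' j (fun h => hj (Finset.mem_erase.2 ⟨hji, h⟩)) (hsub hjC))
          hTe (by
            intro x hx
            rw [himg1, hcongr _ hSe x hx, hcongr _ hTe x hx]
            exact hbal' s hsS v hvT hfree.conn x (hsub hx))
        refine ⟨c', insert i J, ?_, .cons i J _ _ _ ?_ hmove (hmono hsch), ?_, hinj', ?_⟩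
        · exact Finset.insert_subset hi (hJ.trans (Finset.erase_subset _ _))
        · exact fun h => by simpa using hJ h
        · intro j hj
          have hji : j ≠ i := fun h => hj (h ▸ hi)
          rw [hfix j (fun h => hj (Finset.mem_of_mem_erase h)), hc1j j hji]
        · rw [← Finset.insert_erase hi, Finset.image_insert, himg, hfix i (by simp), hc1i,
            Finset.insert_erase hvT]
      · -- `v` is irrelevant
        have hSe : I.image c ⊆ C.erase v := fun x hx => Finset.mem_erase.2
          ⟨fun h => hvS (h ▸ hx), hSC hx⟩
        have hTe : T ⊆ C.erase v := fun x hx => Finset.mem_erase.2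
          ⟨fun h => hvT (h ▸ hx), hT hx⟩
        obtain ⟨c', J, hJ, hsch, hfix, hinj', himg⟩ := ih (C.erase v) hC' I c T hinj
          (fun j hj => hSe (Finset.mem_image_of_mem _ hj))
          (fun j hj h => hI' j hj (hsub h)) hTe (by
            intro x hx
            rw [hcongr _ hSe x hx, hcongr _ hTe x hx]
            exact hbal x (hsub hx))
        exact ⟨c', J, hJ, hmono hsch, hfix, hinj', himg⟩

end comb

section geom

/-- Grid adjacency. -/
def gadj (a b : ℤ × ℤ) : Prop :=
  (a.1 = b.1 ∧ (a.2 = b.2 + 1 ∨ b.2 = a.2 + 1)) ∨ (a.2 = b.2 ∧ (a.1 = b.1 + 1 ∨ b.1 = a.1 + 1))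

theorem gadj_symm (a b : ℤ × ℤ) (h : gadj a b) : gadj b a := by
  unfold gadj at *; omega

theorem mem_cell {x p : ℝ × ℝ} :
    p ∈ cell x ↔ (x.1 ≤ p.1 ∧ p.1 ≤ x.1 + 1) ∧ (x.2 ≤ p.2 ∧ p.2 ≤ x.2 + 1) := by
  rw [cell, Set.mem_prod, Set.mem_Icc, Set.mem_Icc]

theorem mem_int_cell {x p : ℝ × ℝ} :
    p ∈ interior (cell x) ↔ (x.1 < p.1 ∧ p.1 < x.1 + 1) ∧ (x.2 < p.2 ∧ p.2 < x.2 + 1) := by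
  rw [cell, interior_prod_eq, interior_Icc, interior_Icc, Set.mem_prod, Set.mem_Ioo, Set.mem_Ioo]

theorem toR2_inj {a b : ℤ × ℤ} (h : toR2 a = toR2 b) : a = b := by
  simp only [toR2, Prod.mk.injEq, Int.cast_inj] at h
  exact Prod.ext h.1 h.2

/-- Overlapping of the open unit squares at `x` and `m`. -/
def Ov (x : ℝ × ℝ) (m : ℤ × ℤ) : Prop :=
  (x.1 < m.1 + 1 ∧ m.1 < x.1 + 1) ∧ (x.2 < m.2 + 1 ∧ m.2 < x.2 + 1)

theorem ov_toR2 {v m : ℤ × ℤ} (h : Ov (toR2 v) m) : m = v := by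
  obtain ⟨⟨h1, h2⟩, h3, h4⟩ := h
  simp only [toR2] at h1 h2 h3 h4
  norm_cast at h1 h2 h3 h4
  exact Prod.ext (by omega) (by omega)

theorem ov_mem {C : Finset (ℤ × ℤ)} {x : ℝ × ℝ} {m : ℤ × ℤ}
    (hx : cell x ⊆ ⋃ c ∈ C, cell (toR2 c)) (h : Ov x m) : m ∈ C := by
  obtain ⟨⟨h1, h2⟩, h3, h4⟩ := h
  have hp : (((x.1 + m.1 + 1) / 2, (x.2 + m.2 + 1) / 2) : ℝ × ℝ) ∈ cell x := by
    rw [mem_cell]; constructor <;> constructor <;> dsimp only <;> linarith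
  have := hx hp
  simp only [Set.mem_iUnion, mem_cell, toR2] at this
  obtain ⟨c, hc, ⟨k1, k2⟩, k3, k4⟩ := this
  have e1 : (c.1 : ℝ) < m.1 + 1 := by linarith
  have e2 : (m.1 : ℝ) < c.1 + 1 := by linarith
  have e3 : (c.2 : ℝ) < m.2 + 1 := by linarith
  have e4 : (m.2 : ℝ) < c.2 + 1 := by linarith
  norm_cast at e1 e2 e3 e4
  have : m = c := Prod.ext (by omega) (by omega)
  exact this ▸ hc

theorem ov_conn {C : Finset (ℤ × ℤ)} {x : ℝ × ℝ} {a b : ℤ × ℤ}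
    (hx : cell x ⊆ ⋃ c ∈ C, cell (toR2 c)) (ha : Ov x a) (hb : Ov x b) :
    Conn gadj C a b := by
  have hm : Ov x (a.1, b.2) := ⟨ha.1, hb.2⟩
  have haC := ov_mem hx ha
  have hbC := ov_mem hx hb
  have hmC := ov_mem hx hm
  obtain ⟨⟨a1, a2⟩, a3, a4⟩ := ha
  obtain ⟨⟨b1, b2⟩, b3, b4⟩ := hb
  have e1 : (a.1 : ℝ) < b.1 + 2 := by linarith
  have e2 : (b.1 : ℝ) < a.1 + 2 := by linarith
  have e3 : (a.2 : ℝ) < b.2 + 2 := by linarith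
  have e4 : (b.2 : ℝ) < a.2 + 2 := by linarith
  norm_cast at e1 e2 e3 e4
  have c1 : Conn gadj C a (a.1, b.2) := by
    by_cases h : a.2 = b.2
    · rw [← h]; exact .refl
    · exact .single ⟨by unfold gadj; dsimp only; omega, haC, hmC⟩
  have c2 : Conn gadj C (a.1, b.2) b := by
    by_cases h : a.1 = b.1
    · rw [h]; exact .refl
    · exact .single ⟨by unfold gadj; dsimp only; omega, hmC, hbC⟩
  exact c1.trans c2

theorem isOpen_ov (m : ℤ × ℤ) : IsOpen {x : ℝ × ℝ | Ov x m} := by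
  have h1 : IsOpen {x : ℝ × ℝ | x.1 < m.1 + 1} := isOpen_lt (by fun_prop) (by fun_prop)
  have h2 : IsOpen {x : ℝ × ℝ | m.1 < x.1 + 1} := isOpen_lt (by fun_prop) (by fun_prop)
  have h3 : IsOpen {x : ℝ × ℝ | x.2 < m.2 + 1} := isOpen_lt (by fun_prop) (by fun_prop)
  have h4 : IsOpen {x : ℝ × ℝ | m.2 < x.2 + 1} := isOpen_lt (by fun_prop) (by fun_prop)
  exact (h1.inter h2).inter (h3.inter h4)

theorem path_inv {C : Finset (ℤ × ℤ)} {γ : ℝ → ℝ × ℝ} (hγ : ContinuousOn γ (Set.Icc 0 1))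
    (hD : ∀ u ∈ Set.Icc (0 : ℝ) 1, cell (γ u) ⊆ ⋃ c ∈ C, cell (toR2 c)) (m₀ : ℤ × ℤ)
    (h0 : ∃ m, Conn gadj C m₀ m ∧ Ov (γ 0) m) : ∃ m, Conn gadj C m₀ m ∧ Ov (γ 1) m := by
  by_contra hcon
  have hpre : IsPreconnected (γ '' Set.Icc 0 1) := isPreconnected_Icc.image _ hγ
  have hfl : ∀ x : ℝ × ℝ, Ov x (⌊x.1⌋, ⌊x.2⌋) := fun x =>
    ⟨⟨Int.lt_floor_add_one _, by have := Int.floor_le x.1; dsimp only; linarith⟩,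
      Int.lt_floor_add_one _, by have := Int.floor_le x.2; dsimp only; linarith⟩
  obtain ⟨z, ⟨u, hu, rfl⟩, hzu, hzv⟩ := hpre (⋃ m ∈ {m | Conn gadj C m₀ m}, {x | Ov x m})
    (⋃ m ∈ {m | ¬ Conn gadj C m₀ m}, {x | Ov x m})
    (isOpen_biUnion fun m _ => isOpen_ov m) (isOpen_biUnion fun m _ => isOpen_ov m)
    (by
      intro x _
      by_cases h : Conn gadj C m₀ (⌊x.1⌋, ⌊x.2⌋)
      · exact Or.inl (Set.mem_biUnion h (hfl x))
      · exact Or.inr (Set.mem_biUnion (x := (⌊x.1⌋, ⌊x.2⌋)) h (hfl x)))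
    (by
      obtain ⟨m, hm, ho⟩ := h0
      exact ⟨γ 0, ⟨0, by simp, rfl⟩, Set.mem_biUnion (x := m) hm ho⟩)
    ⟨γ 1, ⟨1, by simp, rfl⟩, Set.mem_biUnion (x := (⌊(γ 1).1⌋, ⌊(γ 1).2⌋))
      (fun h => hcon ⟨_, h, hfl _⟩) (hfl _)⟩
  simp only [Set.mem_iUnion, Set.mem_ofPred_eq, exists_prop] at hzu hzv
  obtain ⟨a, ha, hoa⟩ := hzu
  obtain ⟨b, hb, hob⟩ := hzv
  exact hb (ha.trans (ov_conn (hD u hu) hoa hob))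

theorem sched_inv {C : Finset (ℤ × ℤ)} {n : ℕ} {e : Fin n → ℤ × ℤ} {final : Fin n → ℝ × ℝ}
    (h : Relation.ReflTransGen (Move n (⋃ c ∈ C, cell (toR2 c))) (fun i => toR2 (e i)) final)
    (i : Fin n) : ∃ m, Conn gadj C (e i) m ∧ Ov (final i) m := by
  induction h with
  | refl => exact ⟨e i, .refl, by simp [Ov, toR2]⟩
  | @tail c c' _ hm ih =>
    obtain ⟨k, hoth, γ, hγ, hg0, hg1, hgD⟩ := hm
    by_cases hik : i = k
    · subst hik
      rw [← hg1]
      exact path_inv hγ (fun u hu => (hgD u hu).1) _ (hg0.symm ▸ ih)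
    · rw [hoth i hik]; exact ih

theorem seg_mem {a b : ℤ × ℤ} (h : gadj a b) {x : ℝ × ℝ} (hx : x ∈ segment ℝ (toR2 a) (toR2 b)) :
    (cell x ⊆ cell (toR2 a) ∪ cell (toR2 b)) ∧
    ∀ m : ℤ × ℤ, Ov x m → m = a ∨ m = b := by
  obtain ⟨s, t, hs, ht, hst, rfl⟩ := hx
  obtain ⟨a1, a2⟩ := a
  obtain ⟨b1, b2⟩ := b
  have hs' : s = 1 - t := by linarith
  subst hs'
  simp only [gadj] at h
  constructor
  · rintro ⟨p1, p2⟩ hp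
    simp only [Set.mem_union, mem_cell, toR2, Prod.fst_add, Prod.snd_add, Prod.smul_fst,
      Prod.smul_snd, smul_eq_mul] at hp ⊢
    obtain ⟨⟨h1, h2⟩, h3, h4⟩ := hp
    rcases h with ⟨rfl, rfl | rfl⟩ | ⟨rfl, rfl | rfl⟩ <;> push_cast at *
    · rcases le_total (b2 + 1 : ℝ) p2 with h | h
      · left; refine ⟨⟨?_, ?_⟩, ?_, ?_⟩ <;> linarith
      · right; refine ⟨⟨?_, ?_⟩, ?_, ?_⟩ <;> linarith
    · rcases le_total (a2 + 1 : ℝ) p2 with h | h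
      · right; refine ⟨⟨?_, ?_⟩, ?_, ?_⟩ <;> linarith
      · left; refine ⟨⟨?_, ?_⟩, ?_, ?_⟩ <;> linarith
    · rcases le_total (b1 + 1 : ℝ) p1 with h | h
      · left; refine ⟨⟨?_, ?_⟩, ?_, ?_⟩ <;> linarith
      · right; refine ⟨⟨?_, ?_⟩, ?_, ?_⟩ <;> linarith
    · rcases le_total (a1 + 1 : ℝ) p1 with h | h
      · right; refine ⟨⟨?_, ?_⟩, ?_, ?_⟩ <;> linarith
      · left; refine ⟨⟨?_, ?_⟩, ?_, ?_⟩ <;> linarith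
  · rintro ⟨m1, m2⟩ ⟨⟨h1, h2⟩, h3, h4⟩
    simp only [toR2, Prod.fst_add, Prod.snd_add, Prod.smul_fst,
      Prod.smul_snd, smul_eq_mul] at h1 h2 h3 h4
    simp only [Prod.mk.injEq]
    have k1 : ((min a1 b1 : ℤ) : ℝ) < m1 + 1 := by
      rcases h with ⟨rfl, rfl | rfl⟩ | ⟨rfl, rfl | rfl⟩ <;> simp <;> push_cast at * <;> linarith
    have k2 : (m1 : ℝ) < ((max a1 b1 : ℤ) : ℝ) + 1 := by
      rcases h with ⟨rfl, rfl | rfl⟩ | ⟨rfl, rfl | rfl⟩ <;> simp <;> push_cast at * <;> linarith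
    have k3 : ((min a2 b2 : ℤ) : ℝ) < m2 + 1 := by
      rcases h with ⟨rfl, rfl | rfl⟩ | ⟨rfl, rfl | rfl⟩ <;> simp <;> push_cast at * <;> linarith
    have k4 : (m2 : ℝ) < ((max a2 b2 : ℤ) : ℝ) + 1 := by
      rcases h with ⟨rfl, rfl | rfl⟩ | ⟨rfl, rfl | rfl⟩ <;> simp <;> push_cast at * <;> linarith
    norm_cast at k1 k2 k3 k4
    omega

theorem int_cell_disj {x : ℝ × ℝ} {m : ℤ × ℤ} (h : ¬ Ov x m) :
    interior (cell x) ∩ cell (toR2 m) = ∅ := by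
  rw [Set.eq_empty_iff_forall_notMem]
  rintro p ⟨hp, hq⟩
  rw [mem_int_cell] at hp
  rw [mem_cell] at hq
  simp only [toR2] at hq
  apply h
  obtain ⟨⟨_, _⟩, _, _⟩ := hp
  obtain ⟨⟨_, _⟩, _, _⟩ := hq
  refine ⟨⟨?_, ?_⟩, ?_, ?_⟩ <;> linarith

theorem lift_move {C : Finset (ℤ × ℤ)} {n : ℕ} (i : Fin n) (c c' : Fin n → ℤ × ℤ)
    (h : GMove gadj C i c c') :
    MoveOf n (⋃ c ∈ C, cell (toR2 c)) i (fun j => toR2 (c j)) (fun j => toR2 (c' j)) := by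
  obtain ⟨h1, h2, h3, h4⟩ := h
  refine ⟨fun j hj => by simp only [h1 j hj], ?_⟩
  set F : Set (ℝ × ℝ) := {x | cell x ⊆ (⋃ c ∈ C, cell (toR2 c)) ∧
    ∀ j : Fin n, j ≠ i → interior (cell x) ∩ cell (toR2 (c j)) = ∅} with hF
  have hcell : ∀ a ∈ C, cell (toR2 a) ⊆ ⋃ c ∈ C, cell (toR2 c) := fun a ha =>
    Set.subset_biUnion_of_mem (u := fun c => cell (toR2 c)) (show a ∈ (C : Set (ℤ × ℤ)) from ha)
  have hj : JoinedIn F (toR2 (c i)) (toR2 (c' i)) := by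
    generalize c' i = w at h4
    induction h4 with
    | refl =>
      exact JoinedIn.refl ⟨hcell _ h2, fun j hj => int_cell_disj
        (fun h => h3 j hj (ov_toR2 h))⟩
    | @tail a b _ hab ih =>
      refine ih.trans (JoinedIn.of_segment_subset ?_)
      intro x hx
      obtain ⟨k1, k2⟩ := seg_mem hab.1 hx
      refine ⟨k1.trans (Set.union_subset (hcell _ hab.2.1.1) (hcell _ hab.2.2.1)), ?_⟩
      intro j hj
      refine int_cell_disj (fun h => ?_)
      rcases k2 _ h with h | h
      · exact hab.2.1.2 j hj h
      · exact hab.2.2.2 j hj h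
  obtain ⟨p, hp⟩ := hj
  refine ⟨p.extend, p.continuous_extend.continuousOn, by simp, by simp, ?_⟩
  intro u hu
  have := hp ⟨u, hu⟩
  rw [Path.extend_apply _ hu]
  exact this

end geom

end USq

/-- For unlabeled unit squares in `D = ⋃_{c ∈ C} cell c`: if any valid movement schedule
reconfigures the squares from the points of `S` to occupy exactly the cells of `T`, then
there is a valid movement schedule doing so in which each square moves at most once. -/
theorem unlabeled_unit_square_monotone_schedule_exists
    (C : Finset (ℤ × ℤ)) (D : Set (ℝ × ℝ)) (hD : D = ⋃ c ∈ C, cell (toR2 c))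
    (S T : Finset (ℤ × ℤ)) (hSC : S ⊆ C) (hTC : T ⊆ C)
    (n : ℕ) (hS : S.card = n) (hT : T.card = n)
    (hexists : ∃ (e : Fin n → ℤ × ℤ) (final : Fin n → ℝ × ℝ),
      Function.Injective e ∧ (∀ v : ℤ × ℤ, v ∈ S ↔ ∃ i : Fin n, e i = v) ∧
      Relation.ReflTransGen (Move n D) (fun i => toR2 (e i)) final ∧
      (∀ v : ℤ × ℤ, v ∈ T ↔ ∃ i : Fin n, final i = toR2 v)) :
    ∃ (e : Fin n → ℤ × ℤ) (final : Fin n → ℝ × ℝ),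
      Function.Injective e ∧ (∀ v : ℤ × ℤ, v ∈ S ↔ ∃ i : Fin n, e i = v) ∧
      (∀ v : ℤ × ℤ, v ∈ T ↔ ∃ i : Fin n, final i = toR2 v) ∧
      ∃ (N : ℕ) (cs : Fin (N + 1) → Fin n → ℝ × ℝ) (idx : Fin N → Fin n),
        Function.Injective idx ∧
        cs 0 = (fun i => toR2 (e i)) ∧
        cs (Fin.last N) = final ∧
        ∀ k : Fin N, MoveOf n D (idx k) (cs k.castSucc) (cs k.succ) := by
  classical
  subst hD
  obtain ⟨e, final, he, heS, hsched, hfin⟩ := hexists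
  have hSimg : S = Finset.univ.image e := by
    ext v; rw [heS v]; simp
  have hg : ∀ v : ℤ × ℤ, ∃ w, v ∈ T → ∃ i, final i = toR2 v ∧ w = e i := by
    intro v
    by_cases hv : v ∈ T
    · obtain ⟨i, hi⟩ := (hfin v).1 hv
      exact ⟨e i, fun _ => ⟨i, hi, rfl⟩⟩
    · exact ⟨v, fun h => absurd h hv⟩
  choose g hg using hg
  have hginj : Set.InjOn g T := by
    intro a ha b hb hab
    obtain ⟨i, hi, hi'⟩ := hg a ha
    obtain ⟨j, hj, hj'⟩ := hg b hb
    have : i = j := he (by rw [← hi', ← hj', hab])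
    subst this
    exact USq.toR2_inj (hi.symm.trans hj)
  have hgS : T.image g = S := by
    apply Finset.eq_of_subset_of_card_le
    · intro x hx
      obtain ⟨t, ht, rfl⟩ := Finset.mem_image.1 hx
      obtain ⟨i, _, hi⟩ := hg t ht
      exact (heS _).2 ⟨i, hi.symm⟩
    · rw [Finset.card_image_of_injOn hginj, hS, hT]
  have hconn : ∀ t ∈ T, USq.Conn USq.gadj C (g t) t := by
    intro t ht
    obtain ⟨i, hi, hi'⟩ := hg t ht
    obtain ⟨m, hm, ho⟩ := USq.sched_inv hsched i
    rw [hi] at ho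
    rw [hi', ← USq.ov_toR2 ho]
    exact hm
  obtain ⟨c', J, _, hsch, _, _, himg⟩ := USq.comb (ι := Fin n) USq.gadj_symm C.card C rfl
    Finset.univ e T he (fun i _ => hSC ((heS _).2 ⟨i, rfl⟩)) (by simp) hTC (by
      intro x _
      rw [← hSimg, ← hgS, Finset.filter_image, Finset.card_image_of_injOn
        (hginj.mono (by intro y hy; exact (Finset.mem_filter.1 hy).1))]
      congr 1
      apply Finset.filter_congr
      intro t ht
      exact ⟨fun h => ((hconn t ht).symm USq.gadj_symm).trans h, fun h => (hconn t ht).trans h⟩)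
  refine ⟨e, fun i => toR2 (c' i), he, heS, ?_, ?_⟩
  · intro v
    rw [← himg]
    simp only [Finset.mem_image, Finset.mem_univ, true_and]
    exact ⟨fun ⟨i, hi⟩ => ⟨i, by rw [hi]⟩, fun ⟨i, hi⟩ => ⟨i, USq.toR2_inj hi⟩⟩
  · obtain ⟨N, cs, idx, h1, _, h3, h4, h5⟩ := (hsch.map (M' := MoveOf n (⋃ c ∈ C, cell (toR2 c)))
      (fun (c : Fin n → ℤ × ℤ) j => toR2 (c j)) (fun i c c' h => USq.lift_move i c c' h)).toFin
    exact ⟨N, cs, idx, h1, h3, h4, h5⟩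
end

section
/- Let V be a finite type and f : V → V → ℕ. Then there exists g : V → V → ℕ with g(u, v) ≤ f(u, v) for all u, v ∈ V, with excess_g(v) = excess_f(v) for every v ∈ V, and such that the support of g is acyclic: there is no sequence v₀, v₁, …, v_m with m ≥ 1, v_m = v₀, and g(vᵢ, v_{i+1}) > 0 for all 0 ≤ i < m. -/
/-- The total outflow of vertex `v` under the flow `f`. -/
def flowOut {V : Type*} [Fintype V] (f : V → V → ℕ) (v : V) : ℕ := ∑ u, f v u

/-- The total inflow of vertex `v` under the flow `f`. -/
def flowIn {V : Type*} [Fintype V] (f : V → V → ℕ) (v : V) : ℕ := ∑ u, f u v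

/-- The excess (outflow minus inflow, in `ℤ`) of vertex `v` under the flow `f`. -/
def excess {V : Type*} [Fintype V] (f : V → V → ℕ) (v : V) : ℤ :=
  (flowOut f v : ℤ) - (flowIn f v : ℤ)

/-- `f` has a closed walk of length `m` in its support. -/
def HasClosedWalk {V : Type*} (f : V → V → ℕ) (m : ℕ) : Prop :=
  ∃ v : Fin (m + 1) → V, 1 ≤ m ∧ v (Fin.last m) = v 0 ∧
    ∀ i : Fin m, 0 < f (v i.castSucc) (v i.succ)

/-- One step of cycle removal. -/
theorem removal_step {V : Type*} [Fintype V] (f : V → V → ℕ)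
    (h : ∃ m, HasClosedWalk f m) :
    ∃ g : V → V → ℕ, (∀ u v, g u v ≤ f u v) ∧ (∀ v, excess g v = excess f v) ∧
      ∑ u, ∑ v, g u v < ∑ u, ∑ v, f u v := by
  classical
  obtain ⟨m, ⟨v, hm, hc, hp⟩, hmin⟩ :
      ∃ m, HasClosedWalk f m ∧ ∀ k < m, ¬ HasClosedWalk f k :=
    ⟨Nat.find h, Nat.find_spec h, fun k hk => Nat.find_min h hk⟩
  have key : ∀ i j : Fin m, i < j → v i.castSucc ≠ v j.castSucc := by
    intro i j hij he
    have hij' : i.1 < j.1 := hij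
    have hj := j.2
    apply hmin (j.1 - i.1) (by omega)
    refine ⟨fun k => v ⟨i.1 + k.1, by have := k.2; omega⟩, by omega, ?_, ?_⟩
    · have e1 : (⟨i.1 + (Fin.last (j.1 - i.1)).1, by simp <;> omega⟩ : Fin (m+1)) = j.castSucc := by
        ext; simp <;> omega
      have e2 : (⟨i.1 + (0 : Fin (j.1 - i.1 + 1)).1, by simp <;> omega⟩ : Fin (m+1))
          = i.castSucc := by
        ext; simp
      simp only [e1, e2, he]
    · intro k
      have hk := k.2
      exact hp ⟨i.1 + k.1, by omega⟩
  have inj : ∀ i j : Fin m, v i.castSucc = v j.castSucc → i = j := by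
    intro i j he
    rcases lt_trichotomy i j with h1 | h1 | h1
    · exact absurd he (key i j h1)
    · exact h1
    · exact absurd he.symm (key j i h1)
  let c : V → V → ℕ := fun u w =>
    ∑ i : Fin m, if v i.castSucc = u ∧ v i.succ = w then 1 else 0
  have hcf : ∀ u w, c u w ≤ f u w := by
    intro u w
    by_cases hex : ∃ i : Fin m, v i.castSucc = u ∧ v i.succ = w
    · obtain ⟨i, rfl, rfl⟩ := hex
      have : c (v i.castSucc) (v i.succ) ≤ 1 := by
        calc c (v i.castSucc) (v i.succ) ≤ ∑ j : Fin m, if j = i then 1 else 0 := by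
              apply Finset.sum_le_sum
              intro j _
              by_cases hji : j = i
              · simp [hji]
              · have : ¬ v j.castSucc = v i.castSucc := fun h => hji (inj j i h)
                simp [this]
          _ = 1 := by simp
      have := hp i
      omega
    · have : c u w = 0 := by
        apply Finset.sum_eq_zero
        intro i _
        exact if_neg fun h => hex ⟨i, h⟩
      omega
  have hout : ∀ u, ∑ w, c u w = ∑ i : Fin m, if v i.castSucc = u then 1 else 0 := by
    intro u
    rw [Finset.sum_comm]
    refine Finset.sum_congr rfl fun i _ => ?_
    by_cases h : v i.castSucc = u <;> simp [h]
  have hin : ∀ w, ∑ u, c u w = ∑ i : Fin m, if v i.succ = w then 1 else 0 := by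
    intro w
    rw [Finset.sum_comm]
    refine Finset.sum_congr rfl fun i _ => ?_
    by_cases h : v i.succ = w <;> simp [h]
  have hbal : ∀ u, ∑ w, c u w = ∑ w, c w u := by
    intro u
    rw [hout, hin]
    have h1 := Fin.sum_univ_succ (fun i : Fin (m+1) => if v i = u then 1 else 0)
    have h2 := Fin.sum_univ_castSucc (fun i : Fin (m+1) => if v i = u then 1 else 0)
    rw [hc] at h2
    omega
  have ho : ∀ u, ∑ w, (f u w - c u w) + ∑ w, c u w = ∑ w, f u w := by
    intro u
    rw [← Finset.sum_add_distrib]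
    exact Finset.sum_congr rfl fun w _ => Nat.sub_add_cancel (hcf u w)
  have hi : ∀ u, ∑ w, (f w u - c w u) + ∑ w, c w u = ∑ w, f w u := by
    intro u
    rw [← Finset.sum_add_distrib]
    exact Finset.sum_congr rfl fun w _ => Nat.sub_add_cancel (hcf w u)
  refine ⟨fun u w => f u w - c u w, fun u w => Nat.sub_le _ _, ?_, ?_⟩
  · intro u
    have a := ho u
    have b := hi u
    have d := hbal u
    unfold excess flowOut flowIn
    beta_reduce
    omega
  · have hpos : 0 < ∑ w, c (v (Fin.castSucc ⟨0, hm⟩)) w := by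
      rw [hout]
      refine Finset.sum_pos' (fun _ _ => Nat.zero_le _) ⟨⟨0, hm⟩, Finset.mem_univ _, ?_⟩
      simp
    apply Finset.sum_lt_sum
    · intro u _
      have := ho u
      beta_reduce
      omega
    · refine ⟨v (Fin.castSucc ⟨0, hm⟩), Finset.mem_univ _, ?_⟩
      have := ho (v (Fin.castSucc ⟨0, hm⟩))
      beta_reduce
      omega

/-- Cycle removal: every nonnegative integer flow `f` can be replaced by a pointwise
smaller flow `g` with the same excess at every vertex whose support contains no directed
cycle. -/
theorem exists_acyclic_subflow_with_same_excess
    {V : Type*} [Fintype V] (f : V → V → ℕ) :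
    ∃ g : V → V → ℕ,
      (∀ u v : V, g u v ≤ f u v) ∧
      (∀ v : V, excess g v = excess f v) ∧
      ¬ ∃ (m : ℕ) (v : Fin (m + 1) → V), 1 ≤ m ∧ v (Fin.last m) = v 0 ∧
        ∀ i : Fin m, 0 < g (v i.castSucc) (v i.succ) := by
  induction hn : ∑ u, ∑ v, f u v using Nat.strong_induction_on generalizing f with
  | _ n ih =>
    by_cases h : ∃ m, HasClosedWalk f m
    · obtain ⟨g, hg, he, hlt⟩ := removal_step f h
      obtain ⟨g', hg', he', ha⟩ := ih _ (hn ▸ hlt) g rfl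
      exact ⟨g', fun u v => (hg' u v).trans (hg u v), fun v => (he' v).trans (he v), ha⟩
    · exact ⟨f, fun _ _ => le_rfl, fun _ => rfl, h⟩
end

section
/- Let V be a finite type and f : V → V → ℕ. Let v₀, v₁, …, v_m ∈ V with m ≥ 1, the vertices v₀, …, v_m pairwise distinct, and f(vᵢ, v_{i+1}) ≥ 1 for all 0 ≤ i < m (a directed path in the support of f from s = v₀ to t = v_m). Define g : V → V → ℕ by subtracting 1 from f on each edge (vᵢ, v_{i+1}) of the path and leaving f unchanged elsewhere. Then excess_g(s) = excess_f(s) − 1, excess_g(t) = excess_f(t) + 1, and excess_g(v) = excess_f(v) for every vertex v ∉ {s, t}. -/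
/-- Path cancellation: subtracting one unit of flow along a directed path
`v 0, v 1, …, v m` (with pairwise distinct vertices and positive flow on each path edge)
decreases the excess of the start `v 0` by one, increases the excess of the end `v m` by
one, and preserves the excess at every other vertex. -/
theorem path_cancellation_excess
    {V : Type*} [Fintype V] (f g : V → V → ℕ)
    (m : ℕ) (hm : 1 ≤ m) (v : Fin (m + 1) → V)
    (hinj : Function.Injective v)
    (hpos : ∀ i : Fin m, 1 ≤ f (v i.castSucc) (v i.succ))
    (hg_edge : ∀ i : Fin m, g (v i.castSucc) (v i.succ) = f (v i.castSucc) (v i.succ) - 1)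
    (hg_off : ∀ a b : V, (¬ ∃ i : Fin m, v i.castSucc = a ∧ v i.succ = b) → g a b = f a b) :
    excess g (v 0) = excess f (v 0) - 1 ∧
    excess g (v (Fin.last m)) = excess f (v (Fin.last m)) + 1 ∧
    ∀ w : V, w ≠ v 0 → w ≠ v (Fin.last m) → excess g w = excess f w := by
  have sumlem : ∀ (p q : V → ℕ) (b : V), p b + 1 = q b → (∀ u, u ≠ b → p u = q u) →
      ∑ u, p u + 1 = ∑ u, q u := by
    classical
    intro p q b hb hne
    have h1 := Finset.add_sum_erase Finset.univ p (Finset.mem_univ b)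
    have h2 := Finset.add_sum_erase Finset.univ q (Finset.mem_univ b)
    have h3 : ∑ u ∈ Finset.univ.erase b, p u = ∑ u ∈ Finset.univ.erase b, q u :=
      Finset.sum_congr rfl (fun u hu => hne u (Finset.ne_of_mem_erase hu))
    linarith
  have hout : ∀ i : Fin m, flowOut g (v i.castSucc) + 1 = flowOut f (v i.castSucc) := by
    intro i
    refine sumlem _ _ (v i.succ) ?_ ?_
    · have := hpos i
      have := hg_edge i
      omega
    · intro u hu
      apply hg_off
      rintro ⟨j, hj, hj'⟩
      have := Fin.castSucc_injective m (hinj hj)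
      subst this
      exact hu hj'.symm
  have hin : ∀ i : Fin m, flowIn g (v i.succ) + 1 = flowIn f (v i.succ) := by
    intro i
    refine sumlem (fun u => g u _) (fun u => f u _) (v i.castSucc) ?_ ?_
    · have := hpos i
      have := hg_edge i
      show g _ _ + 1 = f _ _
      omega
    · intro u hu
      apply hg_off
      rintro ⟨j, hj, hj'⟩
      have := Fin.succ_injective m (hinj hj')
      subst this
      exact hu hj.symm
  have hout' : ∀ w, (∀ i : Fin m, v i.castSucc ≠ w) → flowOut g w = flowOut f w := by
    intro w hw
    exact Finset.sum_congr rfl (fun u _ => hg_off _ _ (fun ⟨i, hi, _⟩ => hw i hi))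
  have hin' : ∀ w, (∀ i : Fin m, v i.succ ≠ w) → flowIn g w = flowIn f w := by
    intro w hw
    exact Finset.sum_congr rfl (fun u _ => hg_off _ _ (fun ⟨i, _, hi⟩ => hw i hi))
  unfold excess
  refine ⟨?_, ?_, ?_⟩
  · have h1 := hout ⟨0, hm⟩
    have h2 := hin' (v 0) (fun i h => Fin.succ_ne_zero i (hinj h))
    have h3 : (Fin.castSucc ⟨0, hm⟩ : Fin (m + 1)) = 0 := rfl
    rw [h3] at h1
    omega
  · have h1 := hin ⟨m - 1, by omega⟩
    have h2 := hout' (v (Fin.last m)) (fun i h => (Fin.castSucc_lt_last i).ne (hinj h))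
    have h3 : (Fin.succ ⟨m - 1, by omega⟩ : Fin (m + 1)) = Fin.last m := by
      ext
      simp
      omega
    rw [h3] at h1
    omega
  · intro w h0 hl
    by_cases hw : ∃ k, v k = w
    · obtain ⟨k, rfl⟩ := hw
      have hk0 : k ≠ 0 := fun h => h0 (by rw [h])
      have hkl : k ≠ Fin.last m := fun h => hl (by rw [h])
      obtain ⟨i, hi⟩ := Fin.exists_succ_eq.mpr hk0
      obtain ⟨j, hj⟩ := Fin.exists_castSucc_eq.mpr hkl
      have h1 := hin i
      have h2 := hout j
      rw [hi] at h1
      rw [hj] at h2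
      omega
    · have h1 := hin' w (fun i h => hw ⟨_, h⟩)
      have h2 := hout' w (fun i h => hw ⟨_, h⟩)
      rw [h1, h2]
end

section
/- Let V be a finite type and f : V → V → ℕ whose support is acyclic (there is no sequence v₀, …, v_m with m ≥ 1, v_m = v₀, and f(vᵢ, v_{i+1}) > 0 for all 0 ≤ i < m). Let t ∈ V satisfy in_f(t) > out_f(t). Then there exists a vertex s ∈ V with out_f(s) > in_f(s), together with a directed path s = v₀, v₁, …, v_m = t (m ≥ 1) with f(vᵢ, v_{i+1}) > 0 for all 0 ≤ i < m. -/
theorem exists_path_of_reflTransGen {V : Type*} (r : V → V → Prop) {s t : V}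
    (h : Relation.ReflTransGen r s t) :
    ∃ (m : ℕ) (v : Fin (m + 1) → V), v 0 = s ∧ v (Fin.last m) = t ∧
      ∀ i : Fin m, r (v i.castSucc) (v i.succ) := by
  induction h using Relation.ReflTransGen.head_induction_on with
  | refl => exact ⟨0, fun _ => t, rfl, rfl, fun i => i.elim0⟩
  | head hab _ ih =>
    rename_i a b _
    obtain ⟨m, v, h0, hl, hs⟩ := ih
    refine ⟨m + 1, Fin.cons a v, rfl, ?_, ?_⟩
    · rw [← Fin.succ_last, Fin.cons_succ, hl]
    · intro i
      refine Fin.cases ?_ (fun j => ?_) i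
      · simpa [h0] using hab
      · rw [← Fin.succ_castSucc, Fin.cons_succ, Fin.cons_succ]
        exact hs j

/-- In an acyclic flow `f`, every vertex `t` with strictly larger inflow than outflow is
reached by a flow-carrying directed path from some vertex `s` with strictly larger outflow
than inflow. -/
theorem acyclic_flow_exists_source_path
    {V : Type*} [Fintype V] (f : V → V → ℕ)
    (hacyclic : ¬ ∃ (m : ℕ) (v : Fin (m + 1) → V), 1 ≤ m ∧ v (Fin.last m) = v 0 ∧
      ∀ i : Fin m, 0 < f (v i.castSucc) (v i.succ))
    (t : V) (ht : flowOut f t < flowIn f t) :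
    ∃ (s : V), flowIn f s < flowOut f s ∧
      ∃ (m : ℕ) (v : Fin (m + 1) → V), 1 ≤ m ∧ v 0 = s ∧ v (Fin.last m) = t ∧
        ∀ i : Fin m, 0 < f (v i.castSucc) (v i.succ) := by
  classical
  let S : Finset V :=
    Finset.univ.filter (fun u => Relation.ReflTransGen (fun a b => 0 < f a b) u t)
  have hle : ∑ u ∈ S, flowIn f u ≤ ∑ u ∈ S, flowOut f u := by
    have h1 : ∀ u ∈ S, flowIn f u = ∑ w ∈ S, f w u := by
      intro u hu
      unfold flowIn
      symm
      apply Finset.sum_subset (Finset.subset_univ _)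
      intro w _ hw
      by_contra hne
      apply hw
      simp only [S, Finset.mem_filter, Finset.mem_univ, true_and] at hu ⊢
      exact Relation.ReflTransGen.head (Nat.pos_of_ne_zero hne) hu
    rw [Finset.sum_congr rfl h1, Finset.sum_comm]
    apply Finset.sum_le_sum
    intro w _
    exact Finset.sum_le_sum_of_subset (Finset.subset_univ _)
  have htS : t ∈ S := by
    simp only [S, Finset.mem_filter, Finset.mem_univ, true_and]
    exact Relation.ReflTransGen.refl
  have hex : ∃ s ∈ S, flowIn f s < flowOut f s := by
    by_contra! hcon
    exact absurd (Finset.sum_lt_sum hcon ⟨t, htS, ht⟩) (not_lt.mpr hle)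
  obtain ⟨s, hsS, hs⟩ := hex
  simp only [S, Finset.mem_filter, Finset.mem_univ, true_and] at hsS
  obtain ⟨m, v, h0, hl, hv⟩ := exists_path_of_reflTransGen _ hsS
  refine ⟨s, hs, m, v, ?_, h0, hl, hv⟩
  rcases Nat.eq_zero_or_pos m with rfl | hm
  · exfalso
    have hst : s = t := h0.symm.trans hl
    subst hst
    omega
  · exact hm
end

section
/- Let G be a finite connected simple graph with vertex set V and let S, T ⊆ V with |S| = |T|. Then there exists f : V → V → ℕ such that f(u, v) > 0 implies u and v are adjacent in G, and for every vertex v ∈ V, excess_f(v) = (1 if v ∈ S else 0) − (1 if v ∈ T else 0). -/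
theorem excess_add_aux {V : Type*} [Fintype V] (f g : V → V → ℕ) (v : V) :
    excess (fun a b => f a b + g a b) v = excess f v + excess g v := by
  simp only [excess, flowOut, flowIn, Finset.sum_add_distrib]
  push_cast
  ring

theorem excess_sum_aux {V ι : Type*} [Fintype V] (s : Finset ι) (f : ι → V → V → ℕ) (v : V) :
    excess (fun a b => ∑ i ∈ s, f i a b) v = ∑ i ∈ s, excess (f i) v := by
  simp only [excess, flowOut, flowIn, Finset.sum_sub_distrib]
  push_cast
  rw [Finset.sum_comm]
  congr 1
  rw [Finset.sum_comm]

theorem excess_edge_aux {V : Type*} [Fintype V] [DecidableEq V] (a b v : V) :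
    excess (fun x y => if x = a ∧ y = b then 1 else 0) v
      = (if v = a then (1 : ℤ) else 0) - (if v = b then (1 : ℤ) else 0) := by
  simp [excess, flowOut, flowIn, ite_and]

theorem walk_flow_aux {V : Type*} [Fintype V] [DecidableEq V] (G : SimpleGraph V) {a b : V}
    (p : G.Walk a b) : ∃ f : V → V → ℕ, (∀ u v : V, 0 < f u v → G.Adj u v) ∧
      ∀ v : V, excess f v = (if v = a then (1 : ℤ) else 0) - (if v = b then (1 : ℤ) else 0) := by
  induction p with
  | nil => exact ⟨fun _ _ => 0, by simp, by simp [excess, flowOut, flowIn]⟩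
  | @cons a c b h p ih =>
    obtain ⟨f, hf, hx⟩ := ih
    refine ⟨fun x y => (if x = a ∧ y = c then 1 else 0) + f x y, ?_, ?_⟩
    · intro u v huv
      by_cases hc : u = a ∧ v = c
      · rw [hc.1, hc.2]; exact h
      · exact hf u v (by simpa [hc] using huv)
    · intro v
      rw [excess_add_aux (fun x y => if x = a ∧ y = c then 1 else 0) f, excess_edge_aux, hx]
      ring

/-- On a finite connected graph `G`, for any vertex sets `S`, `T` of the same size there
is a nonnegative integer flow supported on the edges of `G` whose excess is `+1` at each
vertex of `S`, `−1` at each vertex of `T` (and `0` at vertices in both or neither). -/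
theorem exists_flow_from_sources_to_sinks
    {V : Type*} [Fintype V] [DecidableEq V]
    (G : SimpleGraph V) (hG : G.Connected)
    (S T : Finset V) (hST : S.card = T.card) :
    ∃ f : V → V → ℕ,
      (∀ u v : V, 0 < f u v → G.Adj u v) ∧
      ∀ v : V, excess f v = (if v ∈ S then (1 : ℤ) else 0) - (if v ∈ T then (1 : ℤ) else 0) := by
  obtain ⟨r⟩ := hG.nonempty
  choose f hf hx using fun a b : V => walk_flow_aux G (hG.preconnected a b).some
  refine ⟨fun x y => (∑ s ∈ S, f s r x y) + ∑ t ∈ T, f r t x y, ?_, ?_⟩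
  · intro u v huv
    by_contra hn
    have h0 : ∀ a b, f a b u v = 0 := fun a b =>
      Nat.eq_zero_of_not_pos fun h => hn (hf a b u v h)
    simp [h0] at huv
  · intro v
    rw [excess_add_aux (fun x y => ∑ s ∈ S, f s r x y) (fun x y => ∑ t ∈ T, f r t x y),
      excess_sum_aux S (fun s => f s r), excess_sum_aux T (fun t => f r t)]
    simp only [hx, Finset.sum_sub_distrib, Finset.sum_ite_eq, Finset.sum_const, hST]
    ring
end
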